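/- arXiv:2404.14391 — 2 statements merged into one kernel-verified Lean document; each statement's English description precedes it below -/
import Mathlib

section
/- Let Δ⃗_n = (Δ_{n,1},…,Δ_{n,d}) be collections of pairwise disjoint closed intervals converging componentwise to pairwise disjoint closed intervals Δ⃗ = (Δ_1,…,Δ_d). For each i, let b_{n,i} be continuous functions defined on some interval containing ∪_m Δ_{m,i} that converge uniformly on this interval to a continuous function b_i. Let y⃗_n and y⃗ be the unique solutions of y⃗_n = ℋ_{Δ⃗_n} y⃗_n + b⃗_n and y⃗ = ℋ_{Δ⃗} y⃗ + b⃗, where (b⃗_n)_i = b_{n,i}|_{Δ_{n,i}} and (b⃗)_i = b_i|_{Δ_i}. Then for each i, the harmonic extensions satisfy H_{Δ_{n,i}}(y⃗_n)_i(z) → H_{Δ_i}(y⃗)_i(z) as n→∞, uniformly for z in the extended complex plane. -/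
open MeasureTheory Set Filter Topology Polynomial

noncomputable section

/-- The arcsine distribution `dω_[a,b](x) = dx/(π √((x−a)(b−x)))` on `[a,b]`. -/
def arcsineMeasure (a b : ℝ) : Measure ℝ :=
  (volume.restrict (Set.Icc a b)).withDensity
    fun x => ENNReal.ofReal (1 / (Real.pi * Real.sqrt ((x - a) * (b - x))))

/-- The branch of `√((z−a)(z−b))` holomorphic off `[a,b]` with `w(z) = z + O(1)` at `∞`. -/
def wBranch (a b : ℝ) (z : ℂ) : ℂ :=
  (z - a) * Complex.exp ((1 / 2 : ℂ) * Complex.log ((z - b) / (z - a)))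

/-- Cauchy transform `∫ u(x)/(z−x) dω_[a,b](x)`. -/
def cauchyT (a b : ℝ) (u : ℝ → ℝ) (z : ℂ) : ℂ :=
  ∫ x, (u x : ℂ) / (z - (x : ℂ)) ∂(arcsineMeasure a b)

/-- `H_Δ u`, the harmonic extension of `u` off `Δ = [a,b]`. -/
def harmExt (a b : ℝ) (u : ℝ → ℝ) (z : ℂ) : ℝ :=
  (wBranch a b z * cauchyT a b u z).re

/-- The outer function `Ω_Δ(f,z) := exp( w_Δ(z) ∫ log f(x)/(z−x) dω_Δ(x) )`. -/
def OmegaFun (a b : ℝ) (f : ℝ → ℝ) (z : ℂ) : ℂ :=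
  Complex.exp (wBranch a b z * cauchyT a b (fun x => Real.log (f x)) z)

/-- The value of `Ω_Δ(f,·)` at infinity: `exp( ∫ log f dω_Δ )`. -/
def OmegaInf (a b : ℝ) (f : ℝ → ℝ) : ℝ :=
  Real.exp (∫ x, Real.log (f x) ∂(arcsineMeasure a b))

/-- Radon–Nikodym derivative `μ′` of `μ` with respect to Lebesgue measure. -/
def lebDeriv (μ : Measure ℝ) (x : ℝ) : ℝ := (μ.rnDeriv volume x).toReal

/-- `v_Δ(x) = π μ′(x) √((x−a)(b−x))`, the density of `μ|_Δ` w.r.t. the arcsine law. -/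
def vDens (μ : Measure ℝ) (a b : ℝ) (x : ℝ) : ℝ :=
  Real.pi * lebDeriv μ x * Real.sqrt ((x - a) * (b - x))

/-- Szegő function `G(e^h μ|_[a,b], z)`. -/
def szegoG (μ : Measure ℝ) (a b : ℝ) (h : ℝ → ℝ) (z : ℂ) : ℂ :=
  OmegaFun a b (fun x => Real.sqrt (Real.exp (h x) * vDens μ a b x)) z

/-- Szegő function `G(e^h μ|_[a,b], ·)` at infinity. -/
def szegoGInf (μ : Measure ℝ) (a b : ℝ) (h : ℝ → ℝ) : ℝ :=
  OmegaInf a b fun x => Real.sqrt (Real.exp (h x) * vDens μ a b x)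

/-- Support of a measure on `ℝ`. -/
def msupp (μ : Measure ℝ) : Set ℝ := {x | ∀ ε > 0, 0 < μ (Metric.ball x ε)}

def suppInf (μ : Measure ℝ) : ℝ := sInf (msupp μ)
def suppSup (μ : Measure ℝ) : ℝ := sSup (msupp μ)

/-- `Δ(μ)`, the convex hull of the support of `μ`. -/
def convHullSupp (μ : Measure ℝ) : Set ℝ := Set.Icc (suppInf μ) (suppSup μ)

/-- Logarithmic potential `V^ω(x) = −∫ log|x−t| dω(t)`. -/
def logPot (ω : Measure ℝ) (x : ℝ) : ℝ := -∫ t, Real.log |x - t| ∂ω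

/-- The Szegő condition `μ ∈ Sz([a,b])`. -/
def SzCond (μ : Measure ℝ) (a b : ℝ) : Prop :=
  Integrable (fun x => Real.log (lebDeriv μ x)) (arcsineMeasure a b)

/-- The increasing affine map of `[a,b]` onto `[c,d]`. -/
def affIcc (a b c d : ℝ) (x : ℝ) : ℝ := c + ((d - c) / (b - a)) * (x - a)

/-- The uniform Szegő condition `μ ∈ USz([a,b])`. -/
def USzCond (μ : Measure ℝ) (a b : ℝ) : Prop :=
  SzCond μ a b ∧
  ∀ A B : ℕ → ℝ, (∀ n, A n < B n) → (∀ n, Set.Icc (A n) (B n) ⊆ convHullSupp μ) →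
    Tendsto A atTop (𝓝 a) → Tendsto B atTop (𝓝 b) →
    (∀ᶠ n in atTop, SzCond μ (A n) (B n)) ∧
    Tendsto (fun n => ∫ x,
        |Real.log (lebDeriv μ x) - Real.log (lebDeriv μ (affIcc a b (A n) (B n) x))|
          ∂(arcsineMeasure a b)) atTop (𝓝 0)

/-- `P` is the `n`-th monic orthogonal polynomial with respect to `ν`. -/
def IsMonicOP (ν : Measure ℝ) (n : ℕ) (P : Polynomial ℝ) : Prop :=
  P.Monic ∧ P.natDegree = n ∧ ∀ k < n, ∫ x, x ^ k * P.eval x ∂ν = 0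

/-- The weighted measure `e^θ μ`. -/
def expWt (μ : Measure ℝ) (θ : ℝ → ℝ) : Measure ℝ :=
  μ.withDensity fun x => ENNReal.ofReal (Real.exp (θ x))

/-- An Angelesco system of `d` measures, with `Δ(μ_i) = [lo i, hi i]`. -/
structure Angelesco (d : ℕ) (μ : Fin d → Measure ℝ) (lo hi : Fin d → ℝ) : Prop where
  two_le : 2 ≤ d
  bounded : ∀ i, Bornology.IsBounded (msupp (μ i))
  infinite : ∀ i, (msupp (μ i)).Infinite
  lo_eq : ∀ i, lo i = suppInf (μ i)
  hi_eq : ∀ i, hi i = suppSup (μ i)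
  sep : ∀ i j, i < j → hi i < lo j

/-- The vector equilibrium measure `(ω_1,…,ω_d)` with parameter `c`,
with `supp ω_i = [A i, B i] ⊆ [lo i, hi i]` and masses `c i`. -/
structure VecEquil (d : ℕ) (lo hi : Fin d → ℝ) (c : Fin d → ℝ)
    (ω : Fin d → Measure ℝ) (A B : Fin d → ℝ) : Prop where
  endpoints : ∀ i, lo i ≤ A i ∧ A i < B i ∧ B i ≤ hi i
  supp : ∀ i, msupp (ω i) = Set.Icc (A i) (B i)
  mass : ∀ i, ω i Set.univ = ENNReal.ofReal (c i)
  equil : ∀ j, ∃ ℓ : ℝ,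
    (∀ x ∈ Set.Icc (A j) (B j), logPot (ω j) x + ∑ i, logPot (ω i) x = ℓ) ∧
    (∀ x ∈ Set.Icc (lo j) (hi j) \ Set.Icc (A j) (B j),
        ℓ < logPot (ω j) x + ∑ i, logPot (ω i) x)

/-- The vector `(S_1,…,S_d)` of conjugate-symmetric outer functions in `H²(D_{Δ_i})`,
positive at infinity, with boundary moduli `g_i` satisfying
`|S_{i±}|² ∏_{j≠i} S_j = v_i` a.e. on `Δ_i` (outer functions positive at infinity are
recovered from their boundary moduli by `S_i = Ω_{Δ_i}(g_i, ·)`). -/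
def IsSzegoVector (d : ℕ) (A B : Fin d → ℝ) (v : Fin d → ℝ → ℝ)
    (g : Fin d → ℝ → ℝ) (S : Fin d → ℂ → ℂ) : Prop :=
  (∀ i x, 0 ≤ g i x) ∧
  (∀ i, Integrable (fun x => Real.log (g i x)) (arcsineMeasure (A i) (B i))) ∧
  (∀ i, S i = fun z => OmegaFun (A i) (B i) (g i) z) ∧
  (∀ i, ∀ᵐ x ∂(arcsineMeasure (A i) (B i)),
    (g i x) ^ 2 * ∏ j ∈ Finset.univ.erase i, (S j (x : ℂ)).re = v i x)

/-- The operator `ℋ` with component `i` equal to `−(1/2) Σ_{j≠i} H_{[A j, B j]} u_j`. -/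
def calH (d : ℕ) (A B : Fin d → ℝ) (u : Fin d → ℝ → ℝ) (i : Fin d) (x : ℝ) : ℝ :=
  -(1 / 2) * ∑ j ∈ Finset.univ.erase i, harmExt (A j) (B j) (u j) (x : ℂ)

/-- sup norm over `[a,b]`. -/
def supIcc (a b : ℝ) (f : ℝ → ℝ) : ℝ := sSup ((fun x => |f x|) '' Set.Icc a b)

/-- Norm of `C(Δ⃗)`. -/
def vecCNorm (d : ℕ) (A B : Fin d → ℝ) (u : Fin d → ℝ → ℝ) : ℝ :=
  ∑ i, supIcc (A i) (B i) (u i)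

/-- Norm of `C¹(Δ⃗)`. -/
def vecC1Norm (d : ℕ) (A B : Fin d → ℝ) (u : Fin d → ℝ → ℝ) : ℝ :=
  ∑ i, (supIcc (A i) (B i) (u i) +
    supIcc (A i) (B i) (derivWithin (u i) (Set.Icc (A i) (B i))))

/-- membership in `C(Δ⃗)`. -/
def memVecC (d : ℕ) (A B : Fin d → ℝ) (u : Fin d → ℝ → ℝ) : Prop :=
  ∀ i, ContinuousOn (u i) (Set.Icc (A i) (B i))

/-- membership in `C¹(Δ⃗)`. -/
def memVecC1 (d : ℕ) (A B : Fin d → ℝ) (u : Fin d → ℝ → ℝ) : Prop :=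
  ∀ i, ContDiffOn ℝ 1 (u i) (Set.Icc (A i) (B i))

/-- `|w_Δ(x)|` for real `x`. -/
def wAbs (p q x : ℝ) : ℝ := Real.sqrt |(x - p) * (x - q)|

/-- Riemann–Liouville type fractional integral of order 1/2. -/
def fracInt (γ : ℝ) (θ : ℝ → ℝ) (x : ℝ) : ℝ :=
  (Real.sqrt Real.pi)⁻¹ * ∫ t in γ..x, θ t / Real.sqrt |x - t|


/-- affine map from `[-1,1]` onto `[a,b]` -/
def Laff (a b : ℝ) (s : ℝ) : ℝ := (a + b) / 2 + (b - a) / 2 * s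

theorem arcsine_eq_map (a b : ℝ) (hab : a < b) :
    arcsineMeasure a b = Measure.map (fun θ => Laff a b (Real.cos θ))
      (ENNReal.ofReal (1 / Real.pi) • volume.restrict (Ioo 0 Real.pi)) := by
  have hmeas : Measurable (fun θ => Laff a b (Real.cos θ)) := by
    unfold Laff; fun_prop
  have hr : 0 < (b - a) / 2 := by linarith
  have himg : (fun θ => Laff a b (Real.cos θ)) '' Ioo 0 Real.pi = Ioo a b := by
    ext x
    constructor
    · rintro ⟨θ, ⟨h0, h1⟩, rfl⟩
      have hs := Real.sin_pos_of_pos_of_lt_pi h0 h1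
      have := Real.sin_sq_add_cos_sq θ
      have h2 : Real.cos θ < 1 := by nlinarith
      have h3 : -1 < Real.cos θ := by nlinarith
      simp only [Laff]
      constructor <;> nlinarith
    · rintro ⟨h0, h1⟩
      have e : ((b - a) / 2) * ((x - (a + b) / 2) / ((b - a) / 2)) = x - (a + b) / 2 := by
        rw [mul_div_cancel₀ _ hr.ne']
      set t := (x - (a + b) / 2) / ((b - a) / 2) with ht
      have t1 : t < 1 := by
        by_contra h; push Not at h; nlinarith
      have t2 : -1 < t := by
        by_contra h; push Not at h; nlinarith
      refine ⟨Real.arccos t, ⟨Real.arccos_pos.2 t1, ?_⟩, ?_⟩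
      · exact lt_of_le_of_ne (Real.arccos_le_pi t) (fun h => by
          rw [Real.arccos_eq_pi] at h; linarith)
      · simp only [Laff, Real.cos_arccos t2.le t1.le]; linarith
  have hinj : InjOn (fun θ => Laff a b (Real.cos θ)) (Ioo 0 Real.pi) := by
    intro x hx y hy h
    simp only [Laff] at h
    have : Real.cos x = Real.cos y := by
      have := add_left_cancel h
      exact mul_left_cancel₀ hr.ne' this
    exact Real.injOn_cos ⟨hx.1.le, hx.2.le⟩ ⟨hy.1.le, hy.2.le⟩ this
  have hder : ∀ x ∈ Ioo 0 Real.pi, HasDerivWithinAt (fun θ => Laff a b (Real.cos θ))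
      ((b - a) / 2 * (-Real.sin x)) (Ioo 0 Real.pi) x := by
    intro x _
    unfold Laff
    exact (((Real.hasDerivAt_cos x).const_mul _).const_add _).hasDerivWithinAt
  ext s hs
  rw [Measure.map_apply hmeas hs, arcsineMeasure, withDensity_apply _ hs]
  rw [Measure.restrict_restrict hs, Measure.smul_apply, smul_eq_mul,
    Measure.restrict_apply (hmeas hs)]
  have e1 : (volume.restrict (s ∩ Icc a b)) = volume.restrict (s ∩ Ioo a b) := by
    apply Measure.restrict_congr_set
    exact (ae_eq_refl s).inter Ioo_ae_eq_Icc.symm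
  rw [e1, ← Measure.restrict_restrict hs, ← lintegral_indicator hs, ← himg,
    lintegral_image_eq_lintegral_abs_deriv_mul measurableSet_Ioo hder hinj]
  rw [inter_comm, ← setLIntegral_one, ← lintegral_const_mul _ measurable_const]
  rw [inter_comm, ← Measure.restrict_restrict (hmeas hs), ← lintegral_indicator (hmeas hs)]
  refine setLIntegral_congr_fun measurableSet_Ioo ?_
  intro θ hθ
  have hsin := Real.sin_pos_of_pos_of_lt_pi hθ.1 hθ.2
  by_cases hm : Laff a b (Real.cos θ) ∈ s
  · have hm' : θ ∈ (fun θ => Laff a b (Real.cos θ)) ⁻¹' s := hm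
    simp only [indicator_of_mem hm, indicator_of_mem hm', mul_one]
    rw [← ENNReal.ofReal_mul (abs_nonneg _)]
    congr 1
    have : (Laff a b (Real.cos θ) - a) * (b - Laff a b (Real.cos θ))
        = ((b - a) / 2 * Real.sin θ) ^ 2 := by
      rw [mul_pow, Real.sin_sq]; unfold Laff; ring
    rw [this, Real.sqrt_sq (by positivity), mul_neg, abs_neg, abs_of_pos (by positivity)]
    have := Real.pi_pos
    have hba : b - a ≠ 0 := by linarith
    field_simp
  · have hm' : θ ∉ (fun θ => Laff a b (Real.cos θ)) ⁻¹' s := hm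
    simp [indicator_of_notMem hm, indicator_of_notMem hm']

abbrev om : Measure ℝ := arcsineMeasure (-1) 1

theorem Laff_std (s : ℝ) : Laff (-1) 1 s = s := by unfold Laff; ring

theorem om_eq_map : om = Measure.map Real.cos
      (ENNReal.ofReal (1 / Real.pi) • volume.restrict (Ioo 0 Real.pi)) := by
  have := arcsine_eq_map (-1) 1 (by norm_num)
  simpa only [Laff_std] using this

instance om_prob : IsProbabilityMeasure om := by
  rw [om_eq_map]
  constructor
  rw [Measure.map_apply Real.measurable_cos MeasurableSet.univ]
  simp only [preimage_univ, Measure.smul_apply, Measure.restrict_apply_univ, Real.volume_Ioo,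
    smul_eq_mul, sub_zero]
  rw [← ENNReal.ofReal_mul (by positivity), one_div_mul_cancel Real.pi_ne_zero, ENNReal.ofReal_one]

theorem om_ae : ∀ᵐ x ∂om, x ∈ Icc (-1 : ℝ) 1 := by
  unfold om arcsineMeasure
  exact (withDensity_absolutelyContinuous _ _).ae_le (ae_restrict_mem measurableSet_Icc)

theorem Laff_emb (a b : ℝ) (hab : a < b) : MeasurableEmbedding (Laff a b) := by
  have hr : (b - a) / 2 ≠ 0 := by linarith
  exact ((Homeomorph.mulLeft₀ _ hr).trans (Homeomorph.addLeft ((a + b) / 2))).measurableEmbedding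

theorem arcsine_map_om (a b : ℝ) (hab : a < b) :
    arcsineMeasure a b = Measure.map (Laff a b) om := by
  rw [om_eq_map, arcsine_eq_map a b hab, Measure.map_map (Laff_emb a b hab).measurable
    Real.measurable_cos]
  rfl

theorem integral_arcsine {E : Type*} [NormedAddCommGroup E] [NormedSpace ℝ E]
    (a b : ℝ) (hab : a < b) (f : ℝ → E) :
    ∫ x, f x ∂(arcsineMeasure a b) = ∫ s, f (Laff a b s) ∂om := by
  rw [arcsine_map_om a b hab, (Laff_emb a b hab).integral_map]

theorem integral_om (f : ℝ → ℂ) (hf : AEStronglyMeasurable f om) :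
    ∫ x, f x ∂om = (1 / Real.pi : ℝ) • ∫ θ in (0 : ℝ)..Real.pi, f (Real.cos θ) := by
  rw [om_eq_map] at hf ⊢
  rw [integral_map Real.measurable_cos.aemeasurable hf, integral_smul_measure,
    ENNReal.toReal_ofReal (by positivity), intervalIntegral.integral_of_le Real.pi_pos.le,
    integral_Ioc_eq_integral_Ioo]

/-- the slit -/
abbrev slit : Set ℂ := Complex.ofReal '' Icc (-1 : ℝ) 1

/-- complex affine map -/
def LaffC (a b : ℝ) (z : ℂ) : ℂ := ((a : ℂ) + b) / 2 + ((b : ℂ) - a) / 2 * z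
/-- inverse complex affine map -/
def LinvC (a b : ℝ) (z : ℂ) : ℂ := (z - ((a : ℂ) + b) / 2) / (((b : ℂ) - a) / 2)

theorem wBranch_aff (a b : ℝ) (hab : a < b) (z : ℂ) :
    wBranch a b (LaffC a b z) = ((b : ℂ) - a) / 2 * wBranch (-1) 1 z := by
  have hr : ((b : ℂ) - a) / 2 ≠ 0 := by
    have : (b : ℂ) - a ≠ 0 := by
      rw [← Complex.ofReal_sub]; exact_mod_cast (sub_pos.2 hab).ne'
    simpa using this
  unfold wBranch
  have e1 : LaffC a b z - a = ((b : ℂ) - a) / 2 * (z - ((-1 : ℝ) : ℂ)) := by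
    unfold LaffC; push_cast; ring
  have e2 : LaffC a b z - b = ((b : ℂ) - a) / 2 * (z - ((1 : ℝ) : ℂ)) := by
    unfold LaffC; push_cast; ring
  rw [e1, e2, mul_div_mul_left _ _ hr, mul_assoc]

theorem harmExt_aff (a b : ℝ) (hab : a < b) (u : ℝ → ℝ) (z : ℂ) :
    harmExt a b u (LaffC a b z) = harmExt (-1) 1 (fun s => u (Laff a b s)) z := by
  have hr : ((b : ℂ) - a) / 2 ≠ 0 := by
    have : (b : ℂ) - a ≠ 0 := by
      rw [← Complex.ofReal_sub]; exact_mod_cast (sub_pos.2 hab).ne'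
    simpa using this
  unfold harmExt cauchyT
  rw [integral_arcsine a b hab, wBranch_aff a b hab]
  have : ∀ s : ℝ, (u (Laff a b s) : ℂ) / (LaffC a b z - (Laff a b s : ℂ))
      = (((b : ℂ) - a) / 2)⁻¹ * ((u (Laff a b s) : ℂ) / (z - (s : ℂ))) := by
    intro s
    have : LaffC a b z - (Laff a b s : ℂ) = ((b : ℂ) - a) / 2 * (z - s) := by
      unfold LaffC Laff; push_cast; ring
    rw [this, div_mul_eq_div_div, div_eq_mul_inv _ (((b : ℂ) - a) / 2)]
    ring
  simp only [this]
  rw [integral_const_mul]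
  congr 1
  generalize (∫ (a_1 : ℝ), (u (Laff a b a_1) : ℂ) / (z - ↑a_1) ∂om) = c
  generalize ((b : ℂ) - a) / 2 = r at hr
  field_simp

theorem LaffC_LinvC (a b : ℝ) (hab : a < b) (z : ℂ) : LaffC a b (LinvC a b z) = z := by
  have : (b : ℂ) - a ≠ 0 := by
    rw [← Complex.ofReal_sub]; exact_mod_cast (sub_pos.2 hab).ne'
  unfold LaffC LinvC; field_simp; ring

theorem LinvC_LaffC (a b : ℝ) (hab : a < b) (z : ℂ) : LinvC a b (LaffC a b z) = z := by
  have : (b : ℂ) - a ≠ 0 := by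
    rw [← Complex.ofReal_sub]; exact_mod_cast (sub_pos.2 hab).ne'
  unfold LaffC LinvC; field_simp; ring

theorem LaffC_ofReal (a b s : ℝ) : LaffC a b (s : ℂ) = (Laff a b s : ℂ) := by
  unfold LaffC Laff; push_cast; ring

theorem Laff_mem (a b : ℝ) (hab : a < b) (s : ℝ) :
    Laff a b s ∈ Icc a b ↔ s ∈ Icc (-1 : ℝ) 1 := by
  unfold Laff
  constructor
  · rintro ⟨h1, h2⟩; constructor <;> nlinarith
  · rintro ⟨h1, h2⟩; constructor <;> nlinarith

theorem LinvC_mem_slit (a b : ℝ) (hab : a < b) (z : ℂ) :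
    LinvC a b z ∈ slit ↔ z ∈ Complex.ofReal '' Icc a b := by
  constructor
  · rintro ⟨s, hs, h⟩
    refine ⟨Laff a b s, (Laff_mem a b hab s).2 hs, ?_⟩
    rw [← LaffC_ofReal, h, LaffC_LinvC a b hab]
  · rintro ⟨x, hx, rfl⟩
    refine ⟨(x - (a + b) / 2) / ((b - a) / 2), ?_, ?_⟩
    · rw [← Laff_mem a b hab]
      have : Laff a b ((x - (a + b) / 2) / ((b - a) / 2)) = x := by
        have : b - a ≠ 0 := (sub_pos.2 hab).ne'
        unfold Laff; field_simp; ring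
      rwa [this]
    · unfold LinvC; push_cast; ring

theorem harmExt_eq (a b : ℝ) (hab : a < b) (u : ℝ → ℝ) (z : ℂ) :
    harmExt a b u z = harmExt (-1) 1 (fun s => u (Laff a b s)) (LinvC a b z) := by
  rw [← harmExt_aff a b hab, LaffC_LinvC a b hab]

theorem isClosed_slit : IsClosed slit :=
  (isCompact_Icc.image Complex.continuous_ofReal).isClosed

/-- Abbreviation for the standard branch. -/
abbrev wst : ℂ → ℂ := wBranch (-1) 1

theorem jouk (z : ℂ) (hz : z ∉ slit) :
    ∃ ζ : ℂ, ζ ≠ 0 ∧ ‖ζ‖ < 1 ∧ z = (ζ + ζ⁻¹) / 2 := by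
  obtain ⟨s, hs⟩ := IsAlgClosed.exists_pow_nat_eq (z ^ 2 - 1) (n := 2) (by norm_num)
  have hprod : (z + s) * (z - s) = 1 := by linear_combination -hs
  have h1 : z + s ≠ 0 := left_ne_zero_of_mul_eq_one hprod
  have h2 : z - s ≠ 0 := right_ne_zero_of_mul_eq_one hprod
  have hi : (z + s)⁻¹ = z - s := inv_eq_of_mul_eq_one_right hprod
  have hi2 : (z - s)⁻¹ = z + s := by rw [← hi, inv_inv]
  have hn : ‖z + s‖ * ‖z - s‖ = 1 := by rw [← norm_mul, hprod, norm_one]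
  rcases lt_trichotomy ‖z + s‖ 1 with h | h | h
  · exact ⟨z + s, h1, h, by rw [hi]; ring⟩
  · exfalso
    apply hz
    refine ⟨(z + s).re, ?_, ?_⟩
    · have := Complex.abs_re_le_norm (z + s)
      rw [h] at this
      exact abs_le.1 this
    · have hc : (z + s)⁻¹ = (starRingEnd ℂ) (z + s) := by
        rw [Complex.inv_def, Complex.normSq_eq_norm_sq, h]; simp
      rw [Complex.re_eq_add_conj, ← hc, hi]; ring
  · refine ⟨z - s, h2, ?_, by rw [hi2]; ring⟩
    by_contra h'
    push Not at h'
    nlinarith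

theorem re_cayley {ζ : ℂ} (h1 : ‖ζ‖ < 1) : 0 < ((1 - ζ) / (1 + ζ)).re := by
  have hne : 1 + ζ ≠ 0 := by
    intro h
    have : ζ = -1 := by linear_combination h
    rw [this] at h1; simp at h1
  have hp : 0 < Complex.normSq (1 + ζ) := Complex.normSq_pos.2 hne
  have hsq : ζ.re ^ 2 + ζ.im ^ 2 < 1 := by
    have := Complex.normSq_eq_norm_sq ζ
    rw [Complex.normSq_apply] at this
    nlinarith [norm_nonneg ζ]
  rw [Complex.div_re, ← add_div]
  apply div_pos _ hp
  simp
  nlinarith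

theorem ne_cayley {ζ : ℂ} (h1 : ‖ζ‖ < 1) : 1 + ζ ≠ 0 := by
  intro h
  have : ζ = -1 := by linear_combination h
  rw [this] at h1; simp at h1

theorem quot_cayley {ζ : ℂ} (h0 : ζ ≠ 0) (h1 : ‖ζ‖ < 1) :
    ((ζ + ζ⁻¹) / 2 - ((1 : ℝ) : ℂ)) / ((ζ + ζ⁻¹) / 2 - ((-1 : ℝ) : ℂ))
      = ((1 - ζ) / (1 + ζ)) ^ 2 := by
  have hne := ne_cayley h1
  have e1 : (ζ + ζ⁻¹) / 2 - ((1 : ℝ) : ℂ) = (1 - ζ) ^ 2 / (2 * ζ) := by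
    push_cast; field_simp; ring
  have e2 : (ζ + ζ⁻¹) / 2 - ((-1 : ℝ) : ℂ) = (1 + ζ) ^ 2 / (2 * ζ) := by
    push_cast; field_simp; ring
  rw [e1, e2]; field_simp

theorem sq_mem_slitPlane {s : ℂ} (hs : 0 < s.re) : s ^ 2 ∈ Complex.slitPlane := by
  rw [Complex.mem_slitPlane_iff]
  by_cases h : s.im = 0
  · left; simp [sq, h]; positivity
  · right; simp [sq]
    intro h'
    have : s.re * s.im = 0 := by linarith
    rcases mul_eq_zero.1 this with h2 | h2
    · exact hs.ne' h2
    · exact h h2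

theorem wst_jouk {ζ : ℂ} (h0 : ζ ≠ 0) (h1 : ‖ζ‖ < 1) :
    wst ((ζ + ζ⁻¹) / 2) = (ζ⁻¹ - ζ) / 2 := by
  have hs := re_cayley h1
  have hne := ne_cayley h1
  unfold wst wBranch
  rw [quot_cayley h0 h1]
  set s := (1 - ζ) / (1 + ζ) with hsdef
  have hs0 : s ≠ 0 := by intro h; rw [h] at hs; simp at hs
  have harg := Complex.abs_arg_lt_pi_div_two_iff.2 (Or.inl hs)
  rw [abs_lt] at harg
  have : Complex.log (s ^ 2) = 2 * Complex.log s := by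
    rw [sq, Complex.log_mul hs0 hs0, two_mul]
    constructor <;> linarith
  rw [this, ← mul_assoc]
  norm_num
  rw [Complex.exp_log hs0, hsdef]
  field_simp
  ring

theorem wst_props (z : ℂ) (hz : z ∉ slit) :
    wst z ≠ 0 ∧ wst z ^ 2 = z ^ 2 - 1 ∧ ‖wst z - z‖ ≤ 1 ∧
      (z - ((1 : ℝ) : ℂ)) / (z - ((-1 : ℝ) : ℂ)) ∈ Complex.slitPlane := by
  obtain ⟨ζ, h0, h1, rfl⟩ := jouk z hz
  have hw := wst_jouk h0 h1
  have hsq : wst ((ζ + ζ⁻¹) / 2) ^ 2 = ((ζ + ζ⁻¹) / 2) ^ 2 - 1 := by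
    rw [hw]; field_simp; ring
  refine ⟨?_, hsq, ?_, ?_⟩
  · intro h
    rw [h] at hsq
    have h2 : (((ζ + ζ⁻¹) / 2) - 1) * (((ζ + ζ⁻¹) / 2) + 1) = 0 := by linear_combination -hsq
    rcases mul_eq_zero.1 h2 with h3 | h3
    · exact hz ⟨1, by norm_num, by push_cast; linear_combination -h3⟩
    · exact hz ⟨-1, by norm_num, by push_cast; linear_combination -h3⟩
  · rw [hw, show (ζ⁻¹ - ζ) / 2 - (ζ + ζ⁻¹) / 2 = -ζ by ring, norm_neg]; exact h1.le
  · rw [quot_cayley h0 h1]; exact sq_mem_slitPlane (re_cayley h1)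

theorem sub_ne_of_slit {z : ℂ} (hz : z ∉ slit) {x : ℝ} (hx : x ∈ Icc (-1 : ℝ) 1) :
    z - (x : ℂ) ≠ 0 := fun h => hz ⟨x, hx, by linear_combination -h⟩

theorem differentiableOn_wst : DifferentiableOn ℂ wst slitᶜ := by
  intro z hz
  apply DifferentiableAt.differentiableWithinAt
  obtain ⟨-, -, -, h⟩ := wst_props z hz
  have hd : z - ((-1 : ℝ) : ℂ) ≠ 0 := sub_ne_of_slit hz (by norm_num)
  unfold wst wBranch
  have h2 : DifferentiableAt ℂ (fun z : ℂ => (z - ((1 : ℝ) : ℂ)) / (z - ((-1 : ℝ) : ℂ))) z := by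
    fun_prop (disch := assumption)
  have h3 := h2.clog h
  fun_prop

/-- the kernel is nonnegative -/
theorem kernel_nonneg (z : ℂ) (hz : z ∉ slit) {x : ℝ} (hx : x ∈ Icc (-1 : ℝ) 1) :
    0 ≤ (wst z / (z - x)).re := by
  have hzx := sub_ne_of_slit hz hx
  obtain ⟨ζ, h0, h1, rfl⟩ := jouk z hz
  have hw := wst_jouk h0 h1
  have e : wst ((ζ + ζ⁻¹) / 2) / ((ζ + ζ⁻¹) / 2 - x) = (1 - ζ ^ 2) / (1 - 2 * x * ζ + ζ ^ 2) := by
    have e1 : (ζ + ζ⁻¹) / 2 - x = (1 - 2 * x * ζ + ζ ^ 2) / (2 * ζ) := by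
      field_simp; ring
    rw [e1] at hzx
    have : 1 - 2 * x * ζ + ζ ^ 2 ≠ 0 := by
      intro h; apply hzx; rw [h]; simp
    rw [hw, e1]; field_simp
  rw [e, Complex.div_re, ← add_div]
  apply div_nonneg _ (Complex.normSq_nonneg _)
  have hsq : ζ.re ^ 2 + ζ.im ^ 2 < 1 := by
    have := Complex.normSq_eq_norm_sq ζ
    rw [Complex.normSq_apply] at this
    nlinarith [norm_nonneg ζ]
  have key : (1 - ζ ^ 2).re * (1 - 2 * x * ζ + ζ ^ 2).re + (1 - ζ ^ 2).im * (1 - 2 * x * ζ + ζ ^ 2).im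
      = (1 - (ζ.re ^ 2 + ζ.im ^ 2)) * (1 + (ζ.re ^ 2 + ζ.im ^ 2) - 2 * x * ζ.re) := by
    simp [sq]; ring
  rw [key]
  apply mul_nonneg (by linarith)
  nlinarith [sq_nonneg (x - ζ.re), sq_nonneg ζ.im, hx.1, hx.2, sq_nonneg (ζ.re - 1), sq_nonneg (ζ.re + 1)]

theorem continuousOn_kernel (z : ℂ) (hz : z ∉ slit) :
    ContinuousOn (fun x : ℝ => wst z / (z - (x : ℂ))) (Icc (-1 : ℝ) 1) := by
  apply ContinuousOn.div continuousOn_const (by fun_prop)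
  intro x hx; exact sub_ne_of_slit hz hx

theorem integrable_om {E : Type*} [NormedAddCommGroup E]
    {f : ℝ → E} (hf : ContinuousOn f (Icc (-1 : ℝ) 1)) : Integrable f om := by
  have hr : om.restrict (Icc (-1 : ℝ) 1) = om := Measure.restrict_eq_self_of_ae_mem om_ae
  rw [← hr]
  exact hf.integrableOn_compact isCompact_Icc

theorem integral_kernel (z : ℂ) (hz : z ∉ slit) :
    ∫ x, wst z / (z - (x : ℂ)) ∂om = 1 := by
  rw [integral_om _ (integrable_om (continuousOn_kernel z hz)).aestronglyMeasurable]
  obtain ⟨ζ, h0, h1, rfl⟩ := jouk z hz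
  have hw := wst_jouk h0 h1
  let A : ℂ → ℂ := fun s => (1 + ζ * s) / (1 - ζ * s)
  have hne : ∀ s : ℂ, ‖s‖ ≤ 1 → 1 - ζ * s ≠ 0 := by
    intro s hs h
    have : ζ * s = 1 := by linear_combination -h
    have h2 : ‖ζ‖ * ‖s‖ = 1 := by rw [← norm_mul, this, norm_one]
    nlinarith [norm_nonneg ζ, norm_nonneg s]
  have hA : DiffContOnCl ℂ A (Metric.ball 0 |1|) := by
    apply DifferentiableOn.diffContOnCl
    intro s hs
    rw [abs_one, closure_ball _ one_ne_zero, mem_closedBall_zero_iff] at hs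
    have := hne s hs
    apply DifferentiableAt.differentiableWithinAt
    simp only [A]
    fun_prop (disch := assumption)
  have hav := hA.circleAverage
  rw [Real.circleAverage_def] at hav
  have hA0 : A 0 = 1 := by simp [A]
  rw [hA0] at hav
  have hcm : ∀ θ : ℝ, circleMap 0 1 θ = Complex.exp (θ * Complex.I) := by intro θ; simp [circleMap]
  have hAc : Continuous fun θ : ℝ => A (circleMap 0 1 θ) := by
    simp only [A]
    apply Continuous.div
    · fun_prop
    · fun_prop
    · intro θ; apply hne; simp
  have hsplit : ∫ θ in (0:ℝ)..2 * Real.pi, A (circleMap 0 1 θ)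
      = (∫ θ in (0:ℝ)..Real.pi, A (circleMap 0 1 θ)) + ∫ θ in (0:ℝ)..Real.pi, A (circleMap 0 1 (2 * Real.pi - θ)) := by
    rw [intervalIntegral.integral_comp_sub_left (fun θ => A (circleMap 0 1 θ)) (2 * Real.pi),
      show 2 * Real.pi - Real.pi = Real.pi by ring, sub_zero,
      intervalIntegral.integral_add_adjacent_intervals (hAc.intervalIntegrable _ _) (hAc.intervalIntegrable _ _)]
  have hAc2 : Continuous fun θ : ℝ => A (circleMap 0 1 (2 * Real.pi - θ)) :=
    hAc.comp (by fun_prop)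
  rw [hsplit, ← intervalIntegral.integral_add (hAc.intervalIntegrable _ _) (hAc2.intervalIntegrable _ _)] at hav
  have hpt : ∀ θ : ℝ, A (circleMap 0 1 θ) + A (circleMap 0 1 (2 * Real.pi - θ))
      = 2 * (wst ((ζ + ζ⁻¹) / 2) / ((ζ + ζ⁻¹) / 2 - (Real.cos θ : ℂ))) := by
    intro θ
    have n1 := hne (circleMap 0 1 θ) (by simp)
    have n2 := hne (circleMap 0 1 (2 * Real.pi - θ)) (by simp)
    have hd := sub_ne_of_slit hz (x := Real.cos θ) ⟨Real.neg_one_le_cos θ, Real.cos_le_one θ⟩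
    have hp : circleMap 0 1 θ * circleMap 0 1 (2 * Real.pi - θ) = 1 := by
      rw [hcm, hcm, ← Complex.exp_add, ← Complex.exp_two_pi_mul_I]
      congr 1; push_cast; ring
    have hc : circleMap 0 1 θ + circleMap 0 1 (2 * Real.pi - θ) = 2 * (Real.cos θ : ℂ) := by
      have : circleMap 0 1 (2 * Real.pi - θ) = Complex.exp (-(θ * Complex.I)) := by
        rw [Complex.exp_neg, ← hcm]
        exact eq_inv_of_mul_eq_one_right hp
      rw [this, hcm, Complex.ofReal_cos, Complex.cos]; ring_nf
    generalize circleMap 0 1 θ = s at *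
    generalize circleMap 0 1 (2 * Real.pi - θ) = t at *
    generalize (Real.cos θ : ℂ) = c at *
    have e1 : (ζ + ζ⁻¹) / 2 - c = ((1 - ζ * s) * (1 - ζ * t)) / (2 * ζ) := by
      field_simp
      linear_combination ζ * hc - ζ ^ 2 * hp
    rw [hw, e1]
    simp only [A]
    field_simp
    linear_combination (-2 * ζ ^ 2) * hp
  simp only [hpt] at hav
  rw [intervalIntegral.integral_const_mul] at hav
  rw [← hav]
  simp only [Complex.real_smul]
  have : (Real.pi : ℂ) ≠ 0 := by exact_mod_cast Real.pi_ne_zero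
  push_cast
  field_simp

abbrev II : Set ℝ := Icc (-1 : ℝ) 1
abbrev CI := BoundedContinuousFunction II ℝ

instance CI_nacg : NormedAddCommGroup CI := BoundedContinuousFunction.instNormedAddCommGroup
instance CI_acg : AddCommGroup CI := CI_nacg.toAddCommGroup
instance CI_acm : AddCommMonoid CI := CI_nacg.toAddCommGroup.toAddCommMonoid
instance CI_nsp : NormedSpace ℝ CI := BoundedContinuousFunction.instNormedSpace
instance CI_mod : Module ℝ CI := CI_nsp.toModule

/-- extension of a continuous function on `[-1,1]` to the line -/
def ex (v : CI) : ℝ → ℝ := IccExtend (by norm_num : (-1 : ℝ) ≤ 1) v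

theorem ex_cont (v : CI) : Continuous (ex v) := v.continuous.Icc_extend'

theorem ex_mem (v : CI) {x : ℝ} (hx : x ∈ II) : ex v x = v ⟨x, hx⟩ :=
  IccExtend_of_mem _ _ hx

theorem ex_sub (v v' : CI) (x : ℝ) : ex (v - v') x = ex v x - ex v' x := rfl
theorem ex_add (v v' : CI) (x : ℝ) : ex (v + v') x = ex v x + ex v' x := rfl
theorem ex_mul (v v' : CI) (x : ℝ) : ex (v * v') x = ex v x * ex v' x := rfl
theorem ex_smul (c : ℝ) (v : CI) (x : ℝ) : ex (c • v) x = c * ex v x := rfl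
theorem ex_abs (v : CI) (x : ℝ) : |ex v x| ≤ ‖v‖ := v.norm_coe_le_norm _

/-- complex form of harmonic extension -/
def hh (v : CI) (z : ℂ) : ℂ := wst z * cauchyT (-1) 1 (ex v) z

theorem harmExt_congr {u u' : ℝ → ℝ} (h : EqOn u u' II) (z : ℂ) :
    harmExt (-1) 1 u z = harmExt (-1) 1 u' z := by
  unfold harmExt cauchyT
  congr 2
  apply integral_congr_ae
  filter_upwards [om_ae] with x hx
  rw [h hx]

theorem hh_eq (v : CI) (z : ℂ) :
    hh v z = ∫ x, (ex v x : ℂ) * (wst z / (z - (x : ℂ))) ∂om := by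
  unfold hh cauchyT
  rw [← integral_const_mul]
  congr 1
  ext x; ring

theorem hh_integrable (v : CI) {z : ℂ} (hz : z ∉ slit) :
    Integrable (fun x : ℝ => (ex v x : ℂ) * (wst z / (z - (x : ℂ)))) om := by
  apply integrable_om
  have := ex_cont v
  exact ContinuousOn.mul (by fun_prop) (continuousOn_kernel z hz)

theorem hh_re (v : CI) {z : ℂ} (hz : z ∉ slit) :
    (hh v z).re = ∫ x, ex v x * (wst z / (z - (x : ℂ))).re ∂om := by
  rw [hh_eq]
  have := integral_re (𝕜 := ℂ) (hh_integrable v hz)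
  simp only [RCLike.re_eq_complex_re] at this
  rw [← this]
  congr 1
  ext x; simp

theorem ker_re_integrable {z : ℂ} (hz : z ∉ slit) :
    Integrable (fun x : ℝ => (wst z / (z - (x : ℂ))).re) om :=
  integrable_om (Complex.continuous_re.comp_continuousOn (continuousOn_kernel z hz))

theorem ker_re_integral {z : ℂ} (hz : z ∉ slit) :
    ∫ x : ℝ, (wst z / (z - (x : ℂ))).re ∂om = 1 := by
  have := integral_re (𝕜 := ℂ) (integrable_om (continuousOn_kernel z hz))
  simp only [RCLike.re_eq_complex_re] at this
  rw [this, integral_kernel z hz]; simp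

theorem exker_integrable (v : CI) {z : ℂ} (hz : z ∉ slit) :
    Integrable (fun x : ℝ => ex v x * (wst z / (z - (x : ℂ))).re) om :=
  integrable_om (((ex_cont v).continuousOn).mul
    (Complex.continuous_re.comp_continuousOn (continuousOn_kernel z hz)))

theorem hh_lower (v : CI) {z : ℂ} (hz : z ∉ slit) (m : ℝ) (hm : ∀ x, m ≤ v x) :
    m ≤ (hh v z).re := by
  rw [hh_re v hz]
  calc m = ∫ x : ℝ, m * (wst z / (z - (x : ℂ))).re ∂om := by
        rw [integral_const_mul, ker_re_integral hz, mul_one]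
    _ ≤ _ := by
        apply integral_mono_ae ((ker_re_integrable hz).const_mul m) (exker_integrable v hz)
        filter_upwards [om_ae] with x hx
        exact mul_le_mul_of_nonneg_right (by rw [ex_mem v hx]; exact hm _) (kernel_nonneg z hz hx)

theorem hh_sub (v v' : CI) {z : ℂ} (hz : z ∉ slit) : hh (v - v') z = hh v z - hh v' z := by
  rw [hh_eq, hh_eq, hh_eq, ← integral_sub (hh_integrable v hz) (hh_integrable v' hz)]
  congr 1; ext x; rw [ex_sub]; push_cast; ring

theorem hh_lin (v v' : CI) (c : ℝ) {z : ℂ} (hz : z ∉ slit) :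
    hh (c • v + v') z = c * hh v z + hh v' z := by
  rw [hh_eq, hh_eq, hh_eq, ← integral_const_mul, ← integral_add ((hh_integrable v hz).const_mul _) (hh_integrable v' hz)]
  congr 1; ext x; rw [ex_add, ex_smul]; push_cast; ring

theorem hh_neg (v : CI) (z : ℂ) : hh (-v) z = - hh v z := by
  rw [hh_eq, hh_eq, ← integral_neg]
  congr 1; ext x
  have : ex (-v) x = - ex v x := rfl
  rw [this]; push_cast; ring

theorem hh_abs (v : CI) {z : ℂ} (hz : z ∉ slit) : |(hh v z).re| ≤ ‖v‖ := by
  rw [abs_le]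
  constructor
  · exact hh_lower v hz _ (fun x => (abs_le.1 (v.norm_coe_le_norm x)).1)
  · have := hh_lower (-v) hz (-‖v‖) (fun x => by
      have := (abs_le.1 (v.norm_coe_le_norm x)).2
      simp only [BoundedContinuousFunction.coe_neg, Pi.neg_apply]; linarith)
    rw [hh_neg, Complex.neg_re] at this; linarith

theorem harm_lip (v v' : CI) {z : ℂ} (hz : z ∉ slit) :
    |(hh v z).re - (hh v' z).re| ≤ ‖v - v'‖ := by
  have := hh_abs (v - v') hz
  rwa [hh_sub v v' hz, Complex.sub_re] at this

theorem wst_norm {z : ℂ} (hz : z ∉ slit) : ‖wst z‖ ≤ ‖z‖ + 1 := by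
  have := (wst_props z hz).2.2.1
  calc ‖wst z‖ = ‖z + (wst z - z)‖ := by ring_nf
    _ ≤ _ := (norm_add_le _ _).trans (by linarith)

theorem hh_tendsto (v : CI) :
    Tendsto (hh v) (cocompact ℂ) (𝓝 ((∫ x, ex v x ∂om : ℝ) : ℂ)) := by
  rw [tendsto_iff_norm_sub_tendsto_zero]
  have hb : ∀ᶠ z : ℂ in cocompact ℂ, 1 < ‖z‖ :=
    (tendsto_norm_cocompact_atTop (E := ℂ)).eventually_gt_atTop 1
  have hlim : Tendsto (fun z : ℂ => ‖v‖ * (2 / (‖z‖ - 1))) (cocompact ℂ) (𝓝 0) := by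
    have : Tendsto (fun z : ℂ => ‖z‖ - 1) (cocompact ℂ) atTop :=
      tendsto_atTop_add_const_right _ _ (tendsto_norm_cocompact_atTop (E := ℂ))
    have := (this.const_div_atTop 2).const_mul ‖v‖
    simpa using this
  refine squeeze_zero' (Eventually.of_forall fun _ => norm_nonneg _) ?_ hlim
  filter_upwards [hb] with z hz1
  have hz : z ∉ slit := by
    rintro ⟨x, hx, rfl⟩
    rw [Complex.norm_real, Real.norm_eq_abs] at hz1
    have := abs_le.2 hx
    linarith
  have hi : Integrable (fun x => (ex v x : ℂ)) om := by
    apply integrable_om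
    have := ex_cont v
    fun_prop
  rw [hh_eq, ← integral_complex_ofReal, ← integral_sub (hh_integrable v hz) hi]
  have : ‖v‖ * (2 / (‖z‖ - 1)) = ‖v‖ * (2 / (‖z‖ - 1)) * om.real univ := by simp
  rw [this]
  apply norm_integral_le_of_norm_le_const
  filter_upwards [om_ae] with x hx
  have hne := sub_ne_of_slit hz hx
  have e : (ex v x : ℂ) * (wst z / (z - x)) - ex v x = ex v x * ((wst z - z + x) / (z - x)) := by
    field_simp; ring
  rw [e, norm_mul, Complex.norm_real, Real.norm_eq_abs, norm_div]
  have h1 : ‖wst z - z + x‖ ≤ 2 := by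
    have := (wst_props z hz).2.2.1
    have hx' : ‖(x : ℂ)‖ ≤ 1 := by rw [Complex.norm_real, Real.norm_eq_abs]; exact abs_le.2 hx
    exact (norm_add_le _ _).trans (by linarith)
  have h2 : ‖z‖ - 1 ≤ ‖z - x‖ := by
    have hx' : ‖(x : ℂ)‖ ≤ 1 := by rw [Complex.norm_real, Real.norm_eq_abs]; exact abs_le.2 hx
    have := norm_sub_norm_le z x
    linarith
  gcongr
  exact ex_abs v x

theorem differentiableOn_hh (v : CI) : DifferentiableOn ℂ (hh v) slitᶜ := by
  apply DifferentiableOn.mul differentiableOn_wst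
  intro z hz
  apply DifferentiableAt.differentiableWithinAt
  obtain ⟨r, hr, hball⟩ := Metric.isOpen_iff.1 isClosed_slit.isOpen_compl z hz
  have hfar : ∀ w ∈ Metric.ball z (r / 2), ∀ x ∈ II, r / 2 ≤ ‖w - (x : ℂ)‖ := by
    intro w hw x hx
    by_contra h
    push Not at h
    have : (x : ℂ) ∈ Metric.ball z r := by
      rw [Metric.mem_ball, dist_eq_norm] at hw ⊢
      calc ‖(x : ℂ) - z‖ = ‖(w - z) - (w - x)‖ := by ring_nf
        _ ≤ _ := norm_sub_le _ _
        _ < r := by linarith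
    exact hball this ⟨x, hx, rfl⟩
  have hmem : ∀ w ∈ Metric.ball z (r / 2), w ∉ slit := fun w hw =>
    hball (Metric.ball_subset_ball (by linarith) hw)
  have hcont : ∀ w ∈ Metric.ball z (r / 2),
      ContinuousOn (fun x : ℝ => (ex v x : ℂ) / (w - (x : ℂ))) II := by
    intro w hw
    have := ex_cont v
    apply ContinuousOn.div (by fun_prop) (by fun_prop)
    intro x hx; exact sub_ne_of_slit (hmem w hw) hx
  have hz0 : z ∈ Metric.ball z (r / 2) := Metric.mem_ball_self (by linarith)
  have := hasDerivAt_integral_of_dominated_loc_of_deriv_le (μ := om) (𝕜 := ℂ)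
    (F := fun w x => (ex v x : ℂ) / (w - (x : ℂ)))
    (F' := fun w x => -(ex v x : ℂ) / (w - (x : ℂ)) ^ 2) (x₀ := z)
    (s := Metric.ball z (r / 2)) (bound := fun _ => ‖v‖ / (r / 2) ^ 2)
    (Metric.ball_mem_nhds z (by linarith))
    (by
      filter_upwards [Metric.ball_mem_nhds z (by linarith : 0 < r / 2)] with w hw
      exact (integrable_om (hcont w hw)).aestronglyMeasurable)
    (integrable_om (hcont z hz0))
    (by
      apply Integrable.aestronglyMeasurable
      apply integrable_om
      have := ex_cont v
      apply ContinuousOn.div (by fun_prop) (by fun_prop)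
      intro x hx; exact pow_ne_zero 2 (sub_ne_of_slit hz hx))
    (by
      filter_upwards [om_ae] with x hx w hw
      rw [norm_div, norm_neg, norm_pow, Complex.norm_real]
      gcongr
      · exact ex_abs v x
      · exact hfar w hw x hx)
    (integrable_const _)
    (by
      filter_upwards [om_ae] with x hx w hw
      have hne := sub_ne_of_slit (hmem w hw) hx
      have := ((hasDerivAt_id w).sub_const (x : ℂ)).fun_inv hne
      have := this.const_mul (ex v x : ℂ)
      convert! this using 1
      simp only [id]; ring)
  exact this.2.differentiableAt

open Classical in
/-- continuous extension of the harmonic extension to the plane -/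
def GG (v : CI) (z : ℂ) : ℝ := if z ∈ slit then ex v z.re else (hh v z).re

theorem GG_off (v : CI) {z : ℂ} (hz : z ∉ slit) : GG v z = (hh v z).re := if_neg hz
theorem GG_on (v : CI) {x : ℝ} (hx : x ∈ II) : GG v x = v ⟨x, hx⟩ := by
  have : (x : ℂ) ∈ slit := ⟨x, hx, rfl⟩
  rw [GG, if_pos this, Complex.ofReal_re, ex_mem v hx]

theorem GG_lip (v v' : CI) (z : ℂ) : |GG v z - GG v' z| ≤ ‖v - v'‖ := by
  by_cases hz : z ∈ slit
  · obtain ⟨x, hx, rfl⟩ := hz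
    rw [GG_on v hx, GG_on v' hx]
    exact (v - v').norm_coe_le_norm ⟨x, hx⟩
  · rw [GG_off v hz, GG_off v' hz]; exact harm_lip v v' hz

theorem GG_lower (v : CI) (z : ℂ) (m : ℝ) (hm : ∀ x, m ≤ v x) : m ≤ GG v z := by
  by_cases hz : z ∈ slit
  · obtain ⟨x, hx, rfl⟩ := hz
    rw [GG_on v hx]; exact hm _
  · rw [GG_off v hz]; exact hh_lower v hz m hm

theorem GG_const (v : CI) (c : ℝ) (hc : ∀ x, v x = c) (z : ℂ) : GG v z = c := by
  apply le_antisymm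
  · by_cases hz : z ∈ slit
    · obtain ⟨x, hx, rfl⟩ := hz
      rw [GG_on v hx, hc]
    · rw [GG_off v hz]
      have := hh_lower (-v) hz (-c) (fun x => by simp [hc])
      rw [hh_neg, Complex.neg_re] at this; linarith
  · exact GG_lower v z c (fun x => (hc x).ge)

theorem poly_form (p : ℝ[X]) : ∃ q : ℝ[X], ∀ z : ℂ, z ∉ slit →
    ∫ x, ((p.eval x : ℝ) : ℂ) * (wst z / (z - (x : ℂ))) ∂om
      = Polynomial.aeval z p - wst z * Polynomial.aeval z q := by
  have hInt : ∀ (p : ℝ[X]) (z : ℂ), z ∉ slit →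
      Integrable (fun x : ℝ => ((p.eval x : ℝ) : ℂ) * (wst z / (z - (x : ℂ)))) om := by
    intro p z hz
    apply integrable_om
    have := p.continuous
    exact ContinuousOn.mul (by fun_prop) (continuousOn_kernel z hz)
  induction p using Polynomial.induction_on with
  | C a =>
    refine ⟨0, fun z hz => ?_⟩
    simp only [Polynomial.eval_C]
    rw [integral_const_mul, integral_kernel z hz]
    simp
  | add p1 p2 h1 h2 =>
    obtain ⟨q1, h1⟩ := h1
    obtain ⟨q2, h2⟩ := h2
    refine ⟨q1 + q2, fun z hz => ?_⟩
    simp only [Polynomial.eval_add, map_add, Complex.ofReal_add, add_mul]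
    rw [integral_add (hInt p1 z hz) (hInt p2 z hz), h1 z hz, h2 z hz]
    ring
  | monomial n a ih =>
    obtain ⟨q, h⟩ := ih
    set p0 : ℝ[X] := Polynomial.C a * Polynomial.X ^ n with hp0
    refine ⟨Polynomial.X * q + Polynomial.C (∫ x, p0.eval x ∂om), fun z hz => ?_⟩
    have e : Polynomial.C a * Polynomial.X ^ (n + 1) = p0 * Polynomial.X := by
      rw [hp0, pow_succ]; ring
    rw [e]
    have hp : Integrable (fun x : ℝ => ((p0.eval x : ℝ) : ℂ)) om := by
      apply integrable_om
      have := p0.continuous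
      fun_prop
    have : ∫ x, (((p0 * Polynomial.X).eval x : ℝ) : ℂ) * (wst z / (z - (x : ℂ))) ∂om
        = ∫ x, (z * (((p0.eval x : ℝ) : ℂ) * (wst z / (z - (x : ℂ)))) - wst z * ((p0.eval x : ℝ) : ℂ)) ∂om := by
      apply integral_congr_ae
      filter_upwards [om_ae] with x hx
      have hne := sub_ne_of_slit hz hx
      simp only [Polynomial.eval_mul, Polynomial.eval_X, Complex.ofReal_mul]
      field_simp
      ring
    rw [this, integral_sub ((hInt p0 z hz).const_mul z) (hp.const_mul _), integral_const_mul,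
      integral_const_mul, h z hz, integral_complex_ofReal]
    simp only [map_add, map_mul, Polynomial.aeval_X, Polynomial.aeval_C, Complex.coe_algebraMap]
    ring

theorem aeval_im_zero (q : ℝ[X]) (x : ℝ) : (Polynomial.aeval (x : ℂ) q).im = 0 := by
  have : Polynomial.aeval (x : ℂ) q = ((q.eval x : ℝ) : ℂ) := by
    rw [← Complex.coe_algebraMap, Polynomial.aeval_algebraMap_apply]; simp
  rw [this, Complex.ofReal_im]

theorem GG_cont_poly (p : ℝ[X]) (v : CI) (hv : ∀ x : II, v x = p.eval (x : ℝ)) :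
    Continuous (GG v) := by
  obtain ⟨q, hq⟩ := poly_form p
  have hform : ∀ z, z ∉ slit →
      GG v z = (Polynomial.aeval z p : ℂ).re - (wst z * Polynomial.aeval z q).re := by
    intro z hz
    rw [GG_off v hz, hh_eq, ← Complex.sub_re, ← hq z hz]
    congr 1
    apply integral_congr_ae
    filter_upwards [om_ae] with x hx
    rw [ex_mem v hx, hv]
  have hpc : Continuous fun z : ℂ => (Polynomial.aeval z p : ℂ) := p.continuous_aeval
  have hqc : Continuous fun z : ℂ => (Polynomial.aeval z q : ℂ) := q.continuous_aeval
  rw [continuous_iff_continuousAt]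
  intro z
  by_cases hz : z ∈ slit
  · obtain ⟨x, hx, rfl⟩ := hz
    -- difference bounded by continuous function vanishing on slit
    let S : ℂ → ℝ := fun z => Real.sqrt ((‖z ^ 2 - 1‖ + (z ^ 2 - 1).re) / 2)
    let Bd : ℂ → ℝ := fun z => S z * ‖(Polynomial.aeval z q : ℂ)‖ + (‖z‖ + 1) * |(Polynomial.aeval z q : ℂ).im|
    have hSc : Continuous S := by simp only [S]; fun_prop
    have hBc : Continuous Bd := by
      have := Complex.continuous_im.comp hqc
      simp only [Bd]
      exact (hSc.mul hqc.norm).add ((continuous_norm.add continuous_const).mul this.abs)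
    have hB0 : Bd (x : ℂ) = 0 := by
      have : S (x : ℂ) = 0 := by
        simp only [S]
        rw [Real.sqrt_eq_zero']
        have e : ((x : ℂ) ^ 2 - 1) = ((x ^ 2 - 1 : ℝ) : ℂ) := by push_cast; ring
        rw [e, Complex.norm_real, Complex.ofReal_re, Real.norm_eq_abs, abs_of_nonpos]
        · simp
        · nlinarith [hx.1, hx.2]
      simp only [Bd, this, aeval_im_zero]; simp
    have hbound : ∀ z, |GG v z - (Polynomial.aeval z p : ℂ).re| ≤ Bd z := by
      intro z
      by_cases hz : z ∈ slit
      · obtain ⟨t, ht, rfl⟩ := hz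
        have : (Polynomial.aeval (t : ℂ) p : ℂ).re = p.eval t := by
          rw [← Complex.coe_algebraMap, Polynomial.aeval_algebraMap_apply]; simp
        rw [GG_on v ht, hv, this]
        simp only [sub_self, abs_zero, Bd, S]
        positivity
      · rw [hform z hz]
        have hS : |(wst z).re| = S z := by
          have h2 := (wst_props z hz).2.1
          simp only [S]
          rw [← h2, norm_pow, ← Real.sqrt_sq_eq_abs]
          congr 1
          have := Complex.normSq_eq_norm_sq (wst z)
          rw [Complex.normSq_apply] at this
          rw [← this]
          simp [sq]
        have e : (Polynomial.aeval z p : ℂ).re - (wst z * Polynomial.aeval z q).re - (Polynomial.aeval z p : ℂ).re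
          = -((wst z).re * (Polynomial.aeval z q : ℂ).re) + (wst z).im * (Polynomial.aeval z q : ℂ).im := by
          rw [Complex.mul_re]; ring
        rw [e]
        refine (abs_add_le _ _).trans ?_
        rw [abs_neg, abs_mul, abs_mul, hS]
        simp only [Bd]
        gcongr
        · exact Complex.abs_re_le_norm _
        · exact (Complex.abs_im_le_norm _).trans (wst_norm hz)
    have ht : Tendsto (fun z => GG v z - (Polynomial.aeval z p : ℂ).re) (𝓝 (x : ℂ)) (𝓝 0) := by
      apply squeeze_zero_norm hbound
      have := hBc.tendsto (x : ℂ)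
      rwa [hB0] at this
    have h3 := ht.add ((Complex.continuous_re.comp hpc).tendsto (x : ℂ))
    have h4 : GG v (x : ℂ) = 0 + (Complex.re ∘ fun z : ℂ => (Polynomial.aeval z p : ℂ)) (x : ℂ) := by
      have h5 := hbound (x : ℂ)
      rw [hB0] at h5
      have h6 := abs_nonpos_iff.1 h5
      simp only [Function.comp]; linarith
    unfold ContinuousAt
    rw [h4]
    refine h3.congr (fun z => ?_)
    simp
  · have hev : ∀ᶠ z' in 𝓝 z, z' ∉ slit := isClosed_slit.isOpen_compl.mem_nhds hz
    have hc : ContinuousAt (fun z' => (hh v z').re) z :=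
      Complex.continuous_re.continuousAt.comp
        ((differentiableOn_hh v).continuousOn.continuousAt (isClosed_slit.isOpen_compl.mem_nhds hz))
    refine hc.congr ?_
    filter_upwards [hev] with z' hz'
    rw [GG_off v hz']

theorem GG_cont (v : CI) : Continuous (GG v) := by
  apply continuous_of_uniform_approx_of_continuous
  intro u hu
  obtain ⟨ε, hε, hu⟩ := Metric.mem_uniformity_dist.1 hu
  obtain ⟨p, hp⟩ := exists_polynomial_near_continuousMap (-1) 1 v.toContinuousMap (ε / 2) (by linarith)
  refine ⟨GG (BoundedContinuousFunction.mkOfCompact (p.toContinuousMapOn _)), GG_cont_poly p _ (fun x => rfl), fun z => hu ?_⟩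
  rw [Real.dist_eq]
  refine (GG_lip _ _ z).trans_lt ?_
  have e : v - BoundedContinuousFunction.mkOfCompact (p.toContinuousMapOn _) =
      BoundedContinuousFunction.mkOfCompact (v.toContinuousMap - p.toContinuousMapOn _) := rfl
  rw [e, BoundedContinuousFunction.norm_mkOfCompact, norm_sub_rev]; linarith

theorem GG_tendsto (v : CI) : Tendsto (GG v) (cocompact ℂ) (𝓝 (∫ x, ex v x ∂om)) := by
  have h := (Complex.continuous_re.tendsto _).comp (hh_tendsto v)
  rw [Complex.ofReal_re] at h
  refine h.congr' ?_
  have : slitᶜ ∈ cocompact ℂ :=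
    (isCompact_Icc.image Complex.continuous_ofReal).compl_mem_cocompact
  filter_upwards [this] with z hz
  rw [GG_off v hz]; rfl

theorem preconn_compl (K : Set ℝ) (hK : IsCompact K) :
    IsPreconnected (Complex.ofReal '' K)ᶜ := by
  obtain ⟨R, hR⟩ := hK.isBounded.exists_norm_le
  have hR1 : R + 1 ∉ K := fun h => by
    have := (le_abs_self _).trans (hR _ h); linarith
  have hconv1 : IsPreconnected {z : ℂ | 0 < z.im} := (convex_halfSpace_im_gt 0).isPreconnected
  have hconv2 : IsPreconnected {z : ℂ | z.im < 0} := (convex_halfSpace_im_lt 0).isPreconnected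
  have hU : IsPreconnected ({z : ℂ | 0 ≤ z.im} ∩ (Complex.ofReal '' K)ᶜ) := by
    apply hconv1.subset_closure
    · intro z hz
      refine ⟨by simp only [mem_ofPred_eq] at hz ⊢; exact hz.le, ?_⟩
      rintro ⟨x, -, rfl⟩
      simp at hz
    · rw [Complex.closure_setOfPred_lt_im]; exact inter_subset_left
  have hL : IsPreconnected ({z : ℂ | z.im ≤ 0} ∩ (Complex.ofReal '' K)ᶜ) := by
    apply hconv2.subset_closure
    · intro z hz
      refine ⟨by simp only [mem_ofPred_eq] at hz ⊢; exact hz.le, ?_⟩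
      rintro ⟨x, -, rfl⟩
      simp at hz
    · rw [Complex.closure_setOfPred_im_lt]; exact inter_subset_left
  have hx : ((R + 1 : ℝ) : ℂ) ∈ (Complex.ofReal '' K)ᶜ := by
    rintro ⟨x, hx, h⟩
    rw [Complex.ofReal_inj] at h
    exact hR1 (h ▸ hx)
  have := IsPreconnected.union ((R + 1 : ℝ) : ℂ) (mem_inter (by simp only [mem_ofPred_eq, Complex.ofReal_im, le_refl]) hx)
    (mem_inter (by simp only [mem_ofPred_eq, Complex.ofReal_im, le_refl]) hx) hU hL
  convert this using 1
  ext z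
  simp only [mem_union, mem_inter_iff, mem_ofPred_eq]
  have := le_total 0 z.im
  tauto

theorem dense_compl (K : Set ℝ) : Dense (Complex.ofReal '' K)ᶜ := by
  have : Dense {z : ℂ | z.im ≠ 0} := by
    have h : Dense (Complex.im ⁻¹' ({0}ᶜ)) := (dense_compl_singleton (0 : ℝ)).preimage Complex.isOpenMap_im
    exact h
  apply this.mono
  rintro z hz ⟨x, -, rfl⟩
  simp at hz

/-- strong maximum principle for real parts of holomorphic functions -/
theorem strong_max {D : Set ℂ} (hD : IsOpen D) (hc : IsPreconnected D) {h : ℂ → ℂ}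
    (hh : DifferentiableOn ℂ h D) {p : ℂ} (hp : p ∈ D) (hmax : ∀ z ∈ D, (h z).re ≤ (h p).re) :
    ∀ z ∈ D, (h z).re = (h p).re := by
  have := Complex.norm_eqOn_of_isPreconnected_of_isMaxOn hc hD
    (f := fun z => Complex.exp (h z)) hh.cexp hp
    (by
      intro z hz
      simp only [mem_ofPred_eq, Function.comp, Complex.norm_exp]
      exact Real.exp_le_exp.2 (hmax z hz))
  intro z hz
  have := this hz
  simp only [Function.comp, Complex.norm_exp, Function.const] at this
  exact Real.exp_injective this

theorem weak_max (K : Set ℝ) (hK : IsCompact K) (hne : K.Nonempty) (V : ℂ → ℝ) (h : ℂ → ℂ)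
    (hV : Continuous V) (hd : DifferentiableOn ℂ h (Complex.ofReal '' K)ᶜ)
    (hVh : ∀ z, z ∉ Complex.ofReal '' K → V z = (h z).re) (c : ℂ)
    (hlim : Tendsto h (cocompact ℂ) (𝓝 c)) :
    ∃ x ∈ K, ∀ z, V z ≤ V (x : ℂ) := by
  have hKc : IsCompact (Complex.ofReal '' K) := hK.image Complex.continuous_ofReal
  have hDo : IsOpen (Complex.ofReal '' K)ᶜ := hKc.isClosed.isOpen_compl
  have hDc := preconn_compl K hK
  have hDd := dense_compl K
  have hVlim : Tendsto V (cocompact ℂ) (𝓝 c.re) := by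
    refine ((Complex.continuous_re.tendsto c).comp hlim).congr' ?_
    filter_upwards [hKc.compl_mem_cocompact] with z hz
    rw [hVh z hz]; rfl
  -- a global max at a point gives the claim
  have key : ∀ p, (∀ z, V z ≤ V p) → ∃ x ∈ K, ∀ z, V z ≤ V (x : ℂ) := by
    intro p hp
    by_cases hpK : p ∈ Complex.ofReal '' K
    · obtain ⟨x, hx, rfl⟩ := hpK
      exact ⟨x, hx, hp⟩
    · have := strong_max hDo hDc hd hpK (fun z hz => by
        rw [← hVh z hz, ← hVh p hpK]; exact hp z)
      have hall : V = fun _ => V p := by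
        apply hV.ext_on hDd continuous_const
        intro z hz
        simp only
        rw [hVh z hz, hVh p hpK]; exact this z hz
      obtain ⟨x, hx⟩ := hne
      refine ⟨x, hx, fun z => ?_⟩
      rw [hall]
  by_cases hcase : ∃ z1, c.re ≤ V z1
  · obtain ⟨z1, hz1⟩ := hcase
    rcases hz1.lt_or_eq with hlt | heq
    · obtain ⟨p, hp⟩ := hV.exists_forall_ge' z1
        ((hVlim.eventually_lt_const hlt).mono fun z hz => hz.le)
      exact key p hp
    · by_cases hc2 : ∃ z2, c.re < V z2
      · obtain ⟨z2, hz2⟩ := hc2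
        obtain ⟨p, hp⟩ := hV.exists_forall_ge' z2
          ((hVlim.eventually_lt_const hz2).mono fun z hz => hz.le)
        exact key p hp
      · push Not at hc2
        exact key z1 (fun z => heq ▸ hc2 z)
  · -- V < c everywhere: contradiction by inversion
    exfalso
    push Not at hcase
    obtain ⟨R, hR⟩ := hK.isBounded.exists_norm_le
    let ρ : ℝ := 1 / (|R| + 1)
    have hρ : 0 < ρ := by positivity
    have hout : ∀ ζ : ℂ, ζ ≠ 0 → ζ ∈ Metric.ball (0 : ℂ) ρ → ζ⁻¹ ∉ Complex.ofReal '' K := by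
      rintro ζ h0 hζ ⟨x, hx, h⟩
      have hx' : ‖ζ⁻¹‖ ≤ |R| := by
        rw [← h, Complex.norm_real]; exact (hR x hx).trans (le_abs_self _)
      rw [mem_ball_zero_iff] at hζ
      have hpos : 0 < ‖ζ‖ := norm_pos_iff.2 h0
      rw [norm_inv] at hx'
      have h2 : (|R| + 1) < ‖ζ‖⁻¹ := by
        rw [lt_inv_comm₀ (by positivity) hpos]
        simpa [ρ] using hζ
      linarith
    let g : ℂ → ℂ := Function.update (fun ζ => h ζ⁻¹) 0 c
    have hg0 : g 0 = c := by simp [g]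
    have hg1 : ∀ ζ, ζ ≠ 0 → g ζ = h ζ⁻¹ := fun ζ hζ => by simp [g, hζ]
    have hgd : DifferentiableOn ℂ g (Metric.ball 0 ρ) := by
      rw [← Complex.differentiableOn_compl_singleton_and_continuousAt_iff
        (Metric.ball_mem_nhds (0 : ℂ) hρ)]
      constructor
      · have : DifferentiableOn ℂ (fun ζ => h ζ⁻¹) (Metric.ball 0 ρ \ {0}) := by
          apply hd.comp
          · intro ζ hζ
            exact (differentiableAt_inv hζ.2).differentiableWithinAt
          · intro ζ hζ; exact hout ζ hζ.2 hζ.1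
        exact this.congr (fun ζ hζ => hg1 ζ hζ.2)
      · rw [continuousAt_update_same]
        exact hlim.comp (Filter.tendsto_inv₀_nhdsNE_zero.trans Metric.cobounded_eq_cocompact.le)
    have hm := strong_max Metric.isOpen_ball (convex_ball (0 : ℂ) ρ).isPreconnected hgd
      (Metric.mem_ball_self hρ) (by
        intro ζ hζ
        by_cases h0 : ζ = 0
        · rw [h0]
        · rw [hg0, hg1 ζ h0, ← hVh _ (hout ζ h0 hζ)]; exact (hcase _).le)
    have hζ : ((ρ / 2 : ℝ) : ℂ) ∈ Metric.ball (0 : ℂ) ρ := by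
      rw [mem_ball_zero_iff, Complex.norm_real, Real.norm_eq_abs, abs_of_pos (by linarith)]; linarith
    have h0 : ((ρ / 2 : ℝ) : ℂ) ≠ 0 := by
      rw [Complex.ofReal_ne_zero]; linarith
    have h2 := hm _ hζ
    rw [hg0, hg1 _ h0, ← hVh _ (hout _ h0 hζ)] at h2
    exact absurd h2 (hcase _).ne

theorem continuous_LinvC (a b : ℝ) : Continuous (LinvC a b) := by
  unfold LinvC; fun_prop

theorem tendsto_LinvC (a b : ℝ) (hab : a < b) :
    Tendsto (LinvC a b) (cocompact ℂ) (cocompact ℂ) := by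
  have hemb : IsClosedEmbedding (LinvC a b) :=
    Topology.IsClosedEmbedding.of_continuous_injective_isClosedMap (continuous_LinvC a b)
      (Function.LeftInverse.injective (LaffC_LinvC a b hab))
      (by
        intro s hs
        have : LinvC a b '' s = LaffC a b ⁻¹' s := by
          rw [image_eq_preimage_of_inverse (LaffC_LinvC a b hab) (LinvC_LaffC a b hab)]
        rw [this]
        exact hs.preimage (by unfold LaffC; fun_prop))
  exact hemb.tendsto_cocompact

theorem LinvC_Laff (a b : ℝ) (hab : a < b) (s : ℝ) : LinvC a b (Laff a b s : ℂ) = s := by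
  rw [← LaffC_ofReal, LinvC_LaffC a b hab]

theorem hh_LinvC_diff (a b : ℝ) (hab : a < b) (v : CI) :
    DifferentiableOn ℂ (fun z => hh v (LinvC a b z)) (Complex.ofReal '' Icc a b)ᶜ := by
  apply (differentiableOn_hh v).comp
  · unfold LinvC; fun_prop
  · intro z hz h
    exact hz ((LinvC_mem_slit a b hab z).1 h)

theorem uniq (d : ℕ) (A B : Fin d → ℝ) (hAB : ∀ i, A i < B i)
    (hdisj : ∀ i j, i ≠ j → Disjoint (Set.Icc (A i) (B i)) (Set.Icc (A j) (B j)))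
    (v : Fin d → CI)
    (hv : ∀ i (s : II), v i s = -(1 / 2) * ∑ j ∈ Finset.univ.erase i,
      GG (v j) (LinvC (A j) (B j) (Laff (A i) (B i) s : ℂ))) : v = 0 := by
  rcases isEmpty_or_nonempty (Fin d) with hE | hN
  · exact Subsingleton.elim _ _
  let U : Fin d → ℂ → ℝ := fun i z => GG (v i) (LinvC (A i) (B i) z)
  let h : Fin d → ℂ → ℂ := fun i z => hh (v i) (LinvC (A i) (B i) z)
  let V : ℂ → ℝ := fun z => ∑ i, U i z
  let W : Fin d → ℂ → ℝ := fun i z => ∑ j ∈ Finset.univ.erase i, U j z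
  have hUc : ∀ i, Continuous (U i) := fun i => (GG_cont (v i)).comp (continuous_LinvC _ _)
  have hVc : Continuous V := continuous_finsetSum _ fun i _ => hUc i
  have hVW : ∀ i z, V z = U i z + W i z := fun i z =>
    (Finset.add_sum_erase _ (fun j => U j z) (Finset.mem_univ i)).symm
  -- values on Δ_i
  have hUon : ∀ i (s : II), U i (Laff (A i) (B i) s : ℂ) = v i s := by
    intro i s
    simp only [U]
    rw [LinvC_Laff _ _ (hAB i), GG_on (v i) s.2]
  have hparam : ∀ i, ∀ x ∈ Icc (A i) (B i), ∃ s : II, x = Laff (A i) (B i) s := by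
    intro i x hx
    obtain ⟨s, hs, h⟩ := (LinvC_mem_slit (A i) (B i) (hAB i) (x : ℂ)).2 ⟨x, hx, rfl⟩
    refine ⟨⟨s, hs⟩, ?_⟩
    have := congrArg (LaffC (A i) (B i)) h
    rw [LaffC_LinvC _ _ (hAB i), LaffC_ofReal] at this
    exact_mod_cast this.symm
  have hfix : ∀ i (s : II), U i (Laff (A i) (B i) s : ℂ) = - V (Laff (A i) (B i) s : ℂ) := by
    intro i s
    have h1 := hv i s
    have h2 := hVW i (Laff (A i) (B i) s : ℂ)
    rw [← hUon i s] at h1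
    change _ = -(1 / 2) * W i _ at h1
    linarith
  have hUh : ∀ i z, z ∉ Complex.ofReal '' Icc (A i) (B i) → U i z = (h i z).re := by
    intro i z hz
    exact GG_off _ (fun h => hz ((LinvC_mem_slit _ _ (hAB i) z).1 h))
  -- global max
  obtain ⟨x0, hx0K, hx0⟩ := weak_max (⋃ i, Icc (A i) (B i)) (isCompact_iUnion fun i => isCompact_Icc)
    (by
      obtain ⟨i⟩ := hN
      exact ⟨A i, mem_iUnion.2 ⟨i, left_mem_Icc.2 (hAB i).le⟩⟩)
    V (fun z => ∑ i, h i z) hVc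
    (by
      apply DifferentiableOn.fun_sum
      intro i _
      refine (hh_LinvC_diff _ _ (hAB i) (v i)).mono ?_
      rw [compl_subset_compl]
      exact image_mono (subset_iUnion (fun i => Icc (A i) (B i)) i))
    (by
      intro z hz
      rw [Complex.re_sum]
      refine Finset.sum_congr rfl fun i _ => hUh i z fun hz' => hz ?_
      exact image_mono (subset_iUnion (fun i => Icc (A i) (B i)) i) hz')
    (∑ i, ((∫ x, ex (v i) x ∂om : ℝ) : ℂ))
    (tendsto_finsetSum _ fun i _ => (hh_tendsto (v i)).comp (tendsto_LinvC _ _ (hAB i)))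
  obtain ⟨i, hi⟩ := mem_iUnion.1 hx0K
  obtain ⟨s0, rfl⟩ := hparam i x0 hi
  set C := V (Laff (A i) (B i) s0 : ℂ) with hC
  have hUi0 : U i (Laff (A i) (B i) s0 : ℂ) = -C := hfix i s0
  have hUlow : ∀ z, -C ≤ U i z := by
    intro z
    apply GG_lower
    intro s
    rw [← hUon i s, hfix i s]
    have := hx0 (Laff (A i) (B i) s : ℂ)
    linarith
  -- domain D_i
  let Ki : Set ℝ := ⋃ j ∈ Finset.univ.erase i, Icc (A j) (B j)
  have hKi : IsCompact Ki := (Finset.univ.erase i).isCompact_biUnion fun j _ => isCompact_Icc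
  have hDo : IsOpen (Complex.ofReal '' Ki)ᶜ :=
    (hKi.image Complex.continuous_ofReal).isClosed.isOpen_compl
  have hsub : ∀ j ∈ Finset.univ.erase i, Complex.ofReal '' Icc (A j) (B j) ⊆ Complex.ofReal '' Ki := by
    intro j hj
    apply image_mono
    intro x hx
    exact mem_iUnion₂.2 ⟨j, hj, hx⟩
  have hWh : ∀ z, z ∉ Complex.ofReal '' Ki →
      W i z = (∑ j ∈ Finset.univ.erase i, h j z).re := by
    intro z hz
    rw [Complex.re_sum]
    exact Finset.sum_congr rfl fun j hj => hUh j z fun hz' => hz (hsub j hj hz')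
  have hmemD : ∀ s : II, (Laff (A i) (B i) s : ℂ) ∈ (Complex.ofReal '' Ki)ᶜ := by
    rintro s ⟨x, hx, hxe⟩
    rw [Complex.ofReal_inj] at hxe
    obtain ⟨j, hj, hxj⟩ := mem_iUnion₂.1 hx
    have hij : j ≠ i := (Finset.mem_erase.1 hj).1
    refine Set.disjoint_left.1 (hdisj j i hij) hxj ?_
    rw [hxe]; exact (Laff_mem _ _ (hAB i) s).2 s.2
  have hWconst := strong_max hDo (preconn_compl Ki hKi)
    (h := fun z => ∑ j ∈ Finset.univ.erase i, h j z)
    (by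
      apply DifferentiableOn.fun_sum
      intro j hj
      refine (hh_LinvC_diff _ _ (hAB j) (v j)).mono ?_
      rw [compl_subset_compl]
      exact hsub j hj)
    (hmemD s0)
    (by
      intro z hz
      rw [← hWh z hz, ← hWh _ (hmemD s0)]
      have h1 := hVW i z
      have h2 := hVW i (Laff (A i) (B i) s0 : ℂ)
      have h3 := hx0 z
      have h4 := hUlow z
      linarith)
  have hW2 : ∀ z, z ∉ Complex.ofReal '' Ki → W i z = 2 * C := by
    intro z hz
    rw [hWh z hz, hWconst z hz, ← hWh _ (hmemD s0)]
    have h2 := hVW i (Laff (A i) (B i) s0 : ℂ)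
    linarith
  have hvi : ∀ s, v i s = -C := by
    intro s
    have h1 := hv i s
    change _ = -(1 / 2) * W i _ at h1
    rw [hW2 _ (hmemD s)] at h1
    linarith
  have hUi : ∀ z, U i z = -C := fun z => GG_const (v i) (-C) hvi _
  have hVall : V = fun _ => C := by
    apply hVc.ext_on (dense_compl Ki) continuous_const
    intro z hz
    have := hVW i z
    rw [hUi, hW2 z hz] at this
    simp only; linarith
  have hvj : ∀ j s, v j s = -C := by
    intro j s
    rw [← hUon j s, hfix j s, hVall]
  have hUj : ∀ j z, U j z = -C := fun j z => GG_const (v j) (-C) (hvj j) _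
  have hC0 : C = 0 := by
    have h1 : V 0 = C := by rw [hVall]
    have h2 : V 0 = ∑ j : Fin d, -C := Finset.sum_congr rfl fun j _ => hUj j 0
    rw [h1] at h2
    simp at h2
    have : ((d : ℝ) + 1) * C = 0 := by linarith
    rcases mul_eq_zero.1 this with h3 | h3
    · have : (0 : ℝ) ≤ d := Nat.cast_nonneg d
      linarith
    · exact h3
  funext j
  ext s
  rw [hvj j s, hC0]; simp

/-- real points outside `[-1,1]` -/
abbrev UU := {x : ℝ // x ∉ II}

theorem UU_slit (x : UU) : ((x : ℝ) : ℂ) ∉ slit := by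
  rintro ⟨t, ht, h⟩
  rw [Complex.ofReal_inj] at h
  exact x.2 (h ▸ ht)

theorem ker_joint : Continuous fun p : UU × II =>
    (wst ((p.1 : ℝ) : ℂ) / (((p.1 : ℝ) : ℂ) - ((p.2 : ℝ) : ℂ))).re := by
  apply Complex.continuous_re.comp
  apply Continuous.div
  · have : Continuous fun x : UU => wst ((x : ℝ) : ℂ) :=
      differentiableOn_wst.continuousOn.comp_continuous (by fun_prop) UU_slit
    exact this.comp continuous_fst
  · fun_prop
  · intro p; exact sub_ne_of_slit (UU_slit p.1) p.2.2

/-- kernel as a continuous map -/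
def kap : C(UU, CI) := ⟨fun x => BoundedContinuousFunction.mkOfCompact (ContinuousMap.curry ⟨_, ker_joint⟩ x),
  (ContinuousMap.isometryEquivBoundedOfCompact II ℝ).continuous.comp (ContinuousMap.curry ⟨_, ker_joint⟩).continuous⟩

theorem kap_apply (x : UU) (t : II) : kap x t = (wst ((x : ℝ) : ℂ) / (((x : ℝ) : ℂ) - ((t : ℝ) : ℂ))).re := rfl

/-- integration functional -/
def ell : CI →L[ℝ] ℝ := LinearMap.mkContinuous
  { toFun := fun v => ∫ x, ex v x ∂om
    map_add' := fun v w => by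
      simp only [ex_add]
      exact integral_add (integrable_om (ex_cont v).continuousOn) (integrable_om (ex_cont w).continuousOn)
    map_smul' := fun c v => by
      simp only [ex_smul, RingHom.id_apply, smul_eq_mul]
      exact integral_const_mul _ _ } 1
  (fun v => by
    simp only [LinearMap.coe_mk, AddHom.coe_mk, one_mul]
    have := norm_integral_le_of_norm_le_const (μ := om) (f := ex v) (C := ‖v‖)
      (Eventually.of_forall fun x => ex_abs v x)
    simpa using this)

theorem ell_apply (v : CI) : ell v = ∫ x, ex v x ∂om := rfl

theorem ell_abs (v : CI) : |∫ x, ex v x ∂om| ≤ ‖v‖ := by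
  have := norm_integral_le_of_norm_le_const (μ := om) (f := ex v) (C := ‖v‖)
      (Eventually.of_forall fun x => ex_abs v x)
  simpa using this

/-- evaluation of the harmonic extension as a functional -/
def kapF : C(UU, CI →L[ℝ] ℝ) :=
  ⟨fun x => ell.comp (ContinuousLinearMap.mul ℝ CI (kap x)), by
    have h1 : Continuous fun x => ContinuousLinearMap.mul ℝ CI (kap x) :=
      (ContinuousLinearMap.mul ℝ CI).continuous.comp kap.continuous
    exact continuous_const.clm_comp h1⟩

theorem kapF_apply (x : UU) (v : CI) : kapF x v = GG v ((x : ℝ) : ℂ) := by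
  rw [GG_off v (UU_slit x), hh_re v (UU_slit x)]
  change ell (kap x * v) = _
  rw [ell_apply]
  apply integral_congr_ae
  filter_upwards [om_ae] with t ht
  rw [ex_mul, ex_mem _ ht, kap_apply, mul_comm]

/-- operator associated with a continuous family of functionals -/
def Lam (E : C(II, CI →L[ℝ] ℝ)) : CI →L[ℝ] CI := LinearMap.mkContinuous
  { toFun := fun v => (BoundedContinuousFunction.mkOfCompact ⟨fun s => E s v, by fun_prop⟩ : CI)
    map_add' := fun v w => by ext s; simp
    map_smul' := fun c v => by ext s; simp } ‖E‖
  (fun v => by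
    rw [BoundedContinuousFunction.norm_le (by positivity)]
    intro s
    exact (ContinuousLinearMap.le_opNorm _ _).trans (by gcongr; exact E.norm_coe_le_norm s))

theorem Lam_apply (E : C(II, CI →L[ℝ] ℝ)) (v : CI) (s : II) : Lam E v s = E s v := rfl

theorem Lam_sub (E E' : C(II, CI →L[ℝ] ℝ)) : ‖Lam E - Lam E'‖ ≤ ‖E - E'‖ := by
  have : Lam E - Lam E' = Lam (E - E') := by
    ext v s; simp [Lam_apply]
  rw [this]
  exact LinearMap.mkContinuous_norm_le _ (norm_nonneg (E - E')) _

theorem Lam_cont : Continuous Lam := by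
  have : LipschitzWith 1 Lam := LipschitzWith.of_dist_le_mul fun E E' => by
    rw [NNReal.coe_one, one_mul, dist_eq_norm]
    exact (Lam_sub E E').trans_eq (dist_eq_norm E E').symm
  exact this.continuous

theorem Lam_compact (E : C(II, CI →L[ℝ] ℝ)) : IsCompactOperator (Lam E) := by
  refine (isCompactOperator_iff_isCompact_closure_image_closedBall (𝕜₁ := ℝ) (Lam E : CI →ₗ[ℝ] CI) one_pos).2 ?_
  apply BoundedContinuousFunction.arzela_ascoli (Metric.closedBall (0:ℝ) ‖E‖) (isCompact_closedBall _ _)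
  · rintro f s ⟨v, hv, rfl⟩
    rw [mem_closedBall_zero_iff] at hv ⊢
    change ‖E s v‖ ≤ _
    refine (ContinuousLinearMap.le_opNorm _ _).trans ?_
    calc ‖E s‖ * ‖v‖ ≤ ‖E‖ * 1 := by gcongr; exact E.norm_coe_le_norm s
      _ = _ := mul_one _
  · intro s
    rw [Metric.equicontinuousAt_iff]
    intro ε hε
    obtain ⟨δ, hδ, hc⟩ := Metric.continuousAt_iff.1 (E.continuous.continuousAt (x := s)) ε hε
    refine ⟨δ, hδ, ?_⟩
    rintro s' hs' ⟨f, ⟨v, hv, rfl⟩⟩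
    rw [mem_closedBall_zero_iff] at hv
    change dist (E s v) (E s' v) < ε
    rw [dist_eq_norm, ← _root_.sub_apply]
    have h1 := hc hs'
    rw [dist_comm, dist_eq_norm] at h1
    refine lt_of_le_of_lt ((ContinuousLinearMap.le_opNorm _ _).trans ?_) h1
    exact mul_le_of_le_one_right (norm_nonneg _) hv

/-- parameter space: two disjoint nondegenerate intervals -/
abbrev PP := {p : (ℝ × ℝ) × (ℝ × ℝ) // p.1.1 < p.1.2 ∧ p.2.1 < p.2.2 ∧
  Disjoint (Icc p.1.1 p.1.2) (Icc p.2.1 p.2.2)}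

/-- coordinate of `Laff_i s` relative to the interval `j`. -/
def gg (p : (ℝ × ℝ) × (ℝ × ℝ)) (s : ℝ) : ℝ :=
  (Laff p.1.1 p.1.2 s - (p.2.1 + p.2.2) / 2) / ((p.2.2 - p.2.1) / 2)

theorem gg_LinvC (p : (ℝ × ℝ) × (ℝ × ℝ)) (s : ℝ) :
    LinvC p.2.1 p.2.2 (Laff p.1.1 p.1.2 s : ℂ) = (gg p s : ℂ) := by
  unfold LinvC gg; push_cast; ring

theorem gg_mem (p : PP) (s : II) : gg p.1 s ∉ II := by
  intro h
  obtain ⟨p, h1, h2, h3⟩ := p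
  have := (LinvC_mem_slit p.2.1 p.2.2 h2 (Laff p.1.1 p.1.2 s : ℂ)).1 ⟨gg p s, h, (gg_LinvC p s).symm⟩
  obtain ⟨x, hx, hxe⟩ := this
  rw [Complex.ofReal_inj] at hxe
  refine Set.disjoint_left.1 h3 ((Laff_mem _ _ h1 s).2 s.2) (hxe ▸ hx)

/-- the family of functionals -/
def EE : C(PP, C(II, CI →L[ℝ] ℝ)) := ContinuousMap.curry
  (kapF.comp ⟨fun q : PP × II => (⟨gg q.1.1 q.2, gg_mem q.1 q.2⟩ : UU), by
    apply Continuous.subtype_mk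
    unfold gg Laff
    apply Continuous.div
    · fun_prop
    · fun_prop
    · intro q
      have := q.1.2.2.1
      linarith⟩)

theorem EE_apply (p : PP) (s : II) (v : CI) :
    EE p s v = GG v (LinvC p.1.2.1 p.1.2.2 (Laff p.1.1.1 p.1.1.2 s : ℂ)) := by
  rw [gg_LinvC]; exact kapF_apply _ _

/-- the operator `ℋ` in normalized coordinates -/
def TT (d : ℕ) (p : (i j : Fin d) → i ≠ j → PP) : (Fin d → CI) →L[ℝ] (Fin d → CI) :=
  ∑ i, ∑ j, if h : i ≠ j then
    (ContinuousLinearMap.single ℝ (fun _ : Fin d => CI) i).comp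
      ((((-(1 / 2) : ℝ)) • Lam (EE (p i j h))).comp (ContinuousLinearMap.proj j)) else 0

theorem TT_apply (d : ℕ) (p : (i j : Fin d) → i ≠ j → PP) (v : Fin d → CI) (i : Fin d) (s : II) :
    TT d p v i s = -(1 / 2) * ∑ j, if h : i ≠ j then EE (p i j h) s (v j) else 0 := by
  unfold TT
  simp only [sum_apply, Finset.sum_apply]
  rw [Finset.sum_eq_single i]
  · rw [Finset.mul_sum, BoundedContinuousFunction.sum_apply]
    refine Finset.sum_congr rfl fun j _ => ?_
    by_cases h : i ≠ j
    · simp only [dif_pos h]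
      simp [Lam_apply]
    · simp only [dif_neg h]; simp
  · intro k _ hk
    apply Finset.sum_eq_zero
    intro j _
    by_cases h : k ≠ j
    · simp only [dif_pos h]
      simp [Pi.single_eq_of_ne hk.symm]
    · simp only [dif_neg h]; rfl
  · simp

theorem cpt_aux {X Y Z W : Type*} [NormedAddCommGroup X] [NormedSpace ℝ X]
    [NormedAddCommGroup Y] [NormedSpace ℝ Y] [NormedAddCommGroup Z] [NormedSpace ℝ Z]
    [NormedAddCommGroup W] [NormedSpace ℝ W] (S : Z →L[ℝ] W) (T : Y →L[ℝ] Z) (R : X →L[ℝ] Y)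
    (c : ℝ) (hT : IsCompactOperator T) : IsCompactOperator (S.comp ((c • T).comp R)) := by
  have h1 : IsCompactOperator (c • T) := hT.smul c
  exact (h1.comp_clm R).clm_comp S

theorem cpt_sum {X W ι : Type*} [NormedAddCommGroup X] [NormedSpace ℝ X]
    [NormedAddCommGroup W] [NormedSpace ℝ W] (s : Finset ι) (T : ι → X →L[ℝ] W)
    (hT : ∀ i, IsCompactOperator (T i)) : IsCompactOperator (∑ i ∈ s, T i : X →L[ℝ] W) := by
  have : ∑ i ∈ s, T i ∈ compactOperator (RingHom.id ℝ) X W :=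
    Submodule.sum_mem _ fun i _ => hT i
  exact this

theorem TT_compact (d : ℕ) (p : (i j : Fin d) → i ≠ j → PP) : IsCompactOperator (TT d p) := by
  unfold TT
  refine cpt_sum _ _ fun i => cpt_sum _ _ fun j => ?_
  by_cases h : i ≠ j
  · rw [dif_pos h]
    exact cpt_aux _ _ _ _ (Lam_compact (EE (p i j h)))
  · rw [dif_neg h]; exact isCompactOperator_zero

theorem TT_tendsto (d : ℕ) (pn : ℕ → (i j : Fin d) → i ≠ j → PP) (p : (i j : Fin d) → i ≠ j → PP)
    (h : ∀ i j hij, Tendsto (fun n => pn n i j hij) atTop (𝓝 (p i j hij))) :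
    Tendsto (fun n => TT d (pn n)) atTop (𝓝 (TT d p)) := by
  unfold TT
  apply tendsto_finsetSum
  intro i _
  apply tendsto_finsetSum
  intro j _
  by_cases hij : i ≠ j
  · simp only [dif_pos hij]
    have h1 : Tendsto (fun n => Lam (EE (pn n i j hij))) atTop (𝓝 (Lam (EE (p i j hij)))) :=
      (Lam_cont.tendsto _).comp ((EE.continuous.tendsto _).comp (h i j hij))
    have h2 : Continuous fun L : CI →L[ℝ] CI =>
        (ContinuousLinearMap.single ℝ (fun _ : Fin d => CI) i).comp
        (((-(1 / 2) : ℝ) • L).comp (ContinuousLinearMap.proj j : (Fin d → CI) →L[ℝ] CI)) :=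
      by
      have h3 : Continuous fun L : CI →L[ℝ] CI => (-(1 / 2) : ℝ) • L := continuous_const_smul _
      exact continuous_const.clm_comp (h3.clm_comp continuous_const)
    exact (h2.tendsto _).comp h1
  · simp only [dif_neg hij]; exact tendsto_const_nhds


theorem solve_conv {X : Type*} [NormedAddCommGroup X] [NormedSpace ℝ X] [CompleteSpace X]
    (T : X →L[ℝ] X) (hT : IsCompactOperator T) (huniq : ∀ v, T v = v → v = 0)
    (Tn : ℕ → X →L[ℝ] X) (hTn : Tendsto Tn atTop (𝓝 T))
    (βn : ℕ → X) (β : X) (hβ : Tendsto βn atTop (𝓝 β))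
    (vn : ℕ → X) (v : X) (hvn : ∀ n, vn n = Tn n (vn n) + βn n) (hv : v = T v + β) :
    Tendsto vn atTop (𝓝 v) := by
  have hne : ¬ Module.End.HasEigenvalue (T : Module.End ℝ X) (1 : ℝ) := by
    intro h
    obtain ⟨x, hx⟩ := h.exists_hasEigenvector
    have h1 := hx.apply_eq_smul
    rw [one_smul] at h1
    exact hx.2 (huniq x h1)
  obtain ⟨K, hK⟩ := hT.antilipschitz_of_not_hasEigenvalue one_ne_zero hne
  have hKb : ∀ x, ‖x‖ ≤ K * ‖T x - x‖ := by
    intro x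
    have := hK.le_mul_dist x 0
    simpa [dist_eq_norm] using this
  rw [tendsto_iff_norm_sub_tendsto_zero] at hTn hβ ⊢
  have hlim : Tendsto (fun n => 2 * (K * (‖Tn n - T‖ * ‖v‖ + ‖βn n - β‖))) atTop (𝓝 0) := by
    have := (((hTn.mul_const ‖v‖).add hβ).const_mul (K : ℝ)).const_mul 2
    simpa using this
  have hsm : ∀ᶠ n in atTop, K * ‖Tn n - T‖ < 1 / 2 := by
    have := hTn.const_mul (K : ℝ)
    rw [mul_zero] at this
    exact this.eventually_lt_const (by norm_num)
  refine squeeze_zero' (Eventually.of_forall fun _ => norm_nonneg _) ?_ hlim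
  filter_upwards [hsm] with n hn
  have h1 := hKb (vn n - v)
  have h2 : T (vn n - v) - (vn n - v) = -((Tn n - T) (vn n)) - (βn n - β) := by
    rw [map_sub, sub_apply]
    have e1 := hvn n
    generalize Tn n (vn n) = x at *
    have e2 : β = v - T v := eq_sub_of_add_eq' hv.symm
    have e3 : βn n = vn n - x := eq_sub_of_add_eq' e1.symm
    rw [e2, e3]; abel
  have h3 : ‖T (vn n - v) - (vn n - v)‖ ≤ ‖Tn n - T‖ * (‖vn n - v‖ + ‖v‖) + ‖βn n - β‖ := by
    rw [h2]
    refine (norm_sub_le _ _).trans ?_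
    rw [norm_neg]
    gcongr
    refine ((Tn n - T).le_opNorm _).trans ?_
    gcongr
    calc ‖vn n‖ = ‖(vn n - v) + v‖ := by rw [sub_add_cancel]
      _ ≤ _ := norm_add_le _ _
  have h4 : (K : ℝ) * ‖T (vn n - v) - (vn n - v)‖ ≤
      K * (‖Tn n - T‖ * (‖vn n - v‖ + ‖v‖) + ‖βn n - β‖) := by gcongr
  have h5 : (K * ‖Tn n - T‖) * ‖vn n - v‖ ≤ 1 / 2 * ‖vn n - v‖ := by gcongr
  nlinarith

theorem G_unif (G : ℂ → ℝ) (hG : Continuous G) (L : ℝ) (hL : Tendsto G (cocompact ℂ) (𝓝 L))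
    (c e : ℕ → ℝ) (hc : Tendsto c atTop (𝓝 1)) (he : Tendsto e atTop (𝓝 0)) (ε : ℝ) (hε : 0 < ε) :
    ∀ᶠ n in atTop, ∀ w : ℂ, |G (c n * w + e n) - G w| ≤ ε := by
  have huc : UniformContinuous G := hG.uniformContinuous_of_tendsto_cocompact hL
  obtain ⟨δ, hδ, hδG⟩ := Metric.uniformContinuous_iff.1 huc ε hε
  have hev : ∀ᶠ w in cocompact ℂ, |G w - L| < ε / 2 := by
    have := (Metric.tendsto_nhds.1 hL) (ε / 2) (by linarith)
    simpa [Real.dist_eq] using this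
  rw [← Metric.cobounded_eq_cocompact, ← comap_norm_atTop] at hev
  obtain ⟨R0, hR0⟩ := eventually_atTop.1 (eventually_comap.1 hev)
  obtain ⟨R, hRp, hR⟩ : ∃ R : ℝ, 0 ≤ R ∧ ∀ w : ℂ, R ≤ ‖w‖ → |G w - L| < ε / 2 :=
    ⟨max R0 0, le_max_right _ _, fun w hw => hR0 ‖w‖ ((le_max_left _ _).trans hw) w rfl⟩
  have h1 : ∀ᶠ n in atTop, |c n - 1| < 1 / 2 := by
    have := (Metric.tendsto_nhds.1 hc) (1 / 2) (by norm_num)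
    simpa [Real.dist_eq] using this
  have h2 : ∀ᶠ n in atTop, |e n| < 1 := by
    have := (Metric.tendsto_nhds.1 he) 1 (by norm_num)
    simpa [Real.dist_eq] using this
  have h3 : ∀ᶠ n in atTop, |c n - 1| * (2 * R + 2) + |e n| < δ := by
    have t : Tendsto (fun n => |c n - 1| * (2 * R + 2) + |e n|) atTop (𝓝 (|(1 : ℝ) - 1| * (2 * R + 2) + |(0 : ℝ)|)) :=
      ((hc.sub_const 1).abs.mul_const _).add he.abs
    refine t.eventually_lt_const ?_
    simpa using hδ
  filter_upwards [h1, h2, h3] with n h1 h2 h3 w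
  rcases le_total ‖w‖ (2 * R + 2) with hw | hw
  · have hd : dist ((c n : ℂ) * w + e n) w < δ := by
      have e1 : (c n : ℂ) * w + e n - w = ((c n - 1 : ℝ) : ℂ) * w + ((e n : ℝ) : ℂ) := by
        push_cast; ring
      rw [dist_eq_norm, e1]
      refine lt_of_le_of_lt ((norm_add_le _ _).trans ?_) h3
      rw [norm_mul, Complex.norm_real, Complex.norm_real, Real.norm_eq_abs, Real.norm_eq_abs]
      gcongr
    have := hδG hd
    rw [Real.dist_eq] at this
    exact this.le
  · have a1 := hR w (by linarith)
    have a2 := hR ((c n : ℂ) * w + e n) (by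
      have t1 : ‖(c n : ℂ) * w‖ ≤ ‖(c n : ℂ) * w + e n‖ + ‖(e n : ℂ)‖ := by
        simpa using norm_sub_le ((c n : ℂ) * w + e n) (e n : ℂ)
      rw [norm_mul, Complex.norm_real, Complex.norm_real, Real.norm_eq_abs, Real.norm_eq_abs] at t1
      have t2 : 1 / 2 ≤ |c n| := by
        have := (abs_lt.1 h1).1
        exact le_trans (by linarith) (le_abs_self _)
      have t3 : 1 / 2 * (2 * R + 2) ≤ |c n| * ‖w‖ := by gcongr
      linarith)
    rw [abs_lt] at a1 a2
    rw [abs_le]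
    constructor <;> linarith

/-- pull-back of a continuous function on `[a,b]` to `[-1,1]` -/
def pull (a b : ℝ) (hab : a < b) (u : ℝ → ℝ) (hu : ContinuousOn u (Icc a b)) : CI :=
  BoundedContinuousFunction.mkOfCompact ⟨fun s : II => u (Laff a b s), by
    refine hu.comp_continuous ?_ (fun s => (Laff_mem a b hab s).2 s.2)
    unfold Laff; fun_prop⟩

theorem pull_apply (a b : ℝ) (hab : a < b) (u : ℝ → ℝ) (hu : ContinuousOn u (Icc a b)) (s : II) :
    pull a b hab u hu s = u (Laff a b s) := rfl

theorem harm_pull (a b : ℝ) (hab : a < b) (u : ℝ → ℝ) (hu : ContinuousOn u (Icc a b)) (z : ℂ)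
    (hz : z ∉ Complex.ofReal '' Icc a b) :
    harmExt a b u z = GG (pull a b hab u hu) (LinvC a b z) := by
  rw [harmExt_eq a b hab, GG_off _ (fun h => hz ((LinvC_mem_slit a b hab z).1 h)),
    harmExt_congr (u' := ex (pull a b hab u hu))]
  · rfl
  · intro s hs
    rw [ex_mem _ hs, pull_apply]

theorem int_pull (a b : ℝ) (hab : a < b) (u : ℝ → ℝ) (hu : ContinuousOn u (Icc a b)) :
    ∫ x, u x ∂(arcsineMeasure a b) = ∫ s, ex (pull a b hab u hu) s ∂om := by
  rw [integral_arcsine a b hab]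
  apply integral_congr_ae
  filter_upwards [om_ae] with s hs
  rw [ex_mem _ hs, pull_apply]

/-- parameters -/
def par (d : ℕ) (A B : Fin d → ℝ) (hAB : ∀ i, A i < B i)
    (hdisj : ∀ i j, i ≠ j → Disjoint (Set.Icc (A i) (B i)) (Set.Icc (A j) (B j)))
    (i j : Fin d) (h : i ≠ j) : PP :=
  ⟨((A i, B i), (A j, B j)), hAB i, hAB j, hdisj i j h⟩

theorem TT_par (d : ℕ) (A B : Fin d → ℝ) (hAB : ∀ i, A i < B i)
    (hdisj : ∀ i j, i ≠ j → Disjoint (Set.Icc (A i) (B i)) (Set.Icc (A j) (B j)))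
    (v : Fin d → CI) (i : Fin d) (s : II) :
    TT d (par d A B hAB hdisj) v i s = -(1 / 2) * ∑ j ∈ Finset.univ.erase i,
      GG (v j) (LinvC (A j) (B j) (Laff (A i) (B i) s : ℂ)) := by
  rw [TT_apply]
  congr 1
  rw [← Finset.add_sum_erase _ _ (Finset.mem_univ i), dif_neg (by simp), zero_add]
  refine Finset.sum_congr rfl fun j hj => ?_
  have hij : i ≠ j := (Finset.mem_erase.1 hj).1.symm
  rw [dif_pos hij, EE_apply]; rfl

theorem fix_pull (d : ℕ) (A B : Fin d → ℝ) (hAB : ∀ i, A i < B i)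
    (hdisj : ∀ i j, i ≠ j → Disjoint (Set.Icc (A i) (B i)) (Set.Icc (A j) (B j)))
    (u b : Fin d → ℝ → ℝ) (hu : ∀ i, ContinuousOn (u i) (Icc (A i) (B i)))
    (hb : ∀ i, ContinuousOn (b i) (Icc (A i) (B i)))
    (hfix : ∀ i, ∀ x ∈ Set.Icc (A i) (B i), u i x = calH d A B u i x + b i x) :
    (fun i => pull (A i) (B i) (hAB i) (u i) (hu i)) =
      TT d (par d A B hAB hdisj) (fun i => pull (A i) (B i) (hAB i) (u i) (hu i)) +
      (fun i => pull (A i) (B i) (hAB i) (b i) (hb i)) := by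
  funext i
  ext s
  have hs := (Laff_mem (A i) (B i) (hAB i) s).2 s.2
  have h1 := hfix i _ hs
  change u i (Laff (A i) (B i) s) =
    TT d (par d A B hAB hdisj) (fun i => pull (A i) (B i) (hAB i) (u i) (hu i)) i s
      + b i (Laff (A i) (B i) s)
  rw [h1, TT_par]
  congr 1
  unfold calH
  congr 1
  refine Finset.sum_congr rfl fun j hj => ?_
  have hij : i ≠ j := (Finset.mem_erase.1 hj).1.symm
  apply harm_pull
  rintro ⟨x, hx, hxe⟩
  rw [Complex.ofReal_inj] at hxe
  exact Set.disjoint_left.1 (hdisj i j hij) hs (hxe ▸ hx)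

theorem pull_tendsto (a b P Q : ℝ) (hab : a < b) (an bn : ℕ → ℝ) (habn : ∀ n, an n < bn n)
    (ha : Tendsto an atTop (𝓝 a)) (hb : Tendsto bn atTop (𝓝 b))
    (hPQ : Icc a b ⊆ Icc P Q) (hPQn : ∀ n, Icc (an n) (bn n) ⊆ Icc P Q)
    (f : ℝ → ℝ) (fn : ℕ → ℝ → ℝ) (hf : ContinuousOn f (Icc P Q))
    (hfn : ∀ n, ContinuousOn (fn n) (Icc P Q))
    (hconv : TendstoUniformlyOn fn f atTop (Icc P Q)) :
    Tendsto (fun n => pull (an n) (bn n) (habn n) (fn n) ((hfn n).mono (hPQn n))) atTop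
      (𝓝 (pull a b hab f (hf.mono hPQ))) := by
  rw [Metric.tendsto_nhds]
  intro ε hε
  obtain ⟨δ, hδ, hδf⟩ := Metric.uniformContinuousOn_iff.1
    (isCompact_Icc.uniformContinuousOn_of_continuous hf) (ε / 4) (by linarith)
  have h1 := Metric.tendstoUniformlyOn_iff.1 hconv (ε / 4) (by linarith)
  have h2 : ∀ᶠ n in atTop, |an n - a| + |bn n - b| < δ := by
    have t : Tendsto (fun n => |an n - a| + |bn n - b|) atTop (𝓝 (|a - a| + |b - b|)) :=
      (ha.sub_const a).abs.add (hb.sub_const b).abs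
    refine t.eventually_lt_const ?_
    simpa using hδ
  filter_upwards [h1, h2] with n h1 h2
  refine lt_of_le_of_lt ((BoundedContinuousFunction.dist_le (C := ε / 2) (by linarith)).2 ?_) (by linarith)
  intro s
  rw [pull_apply, pull_apply]
  have m1 := hPQn n ((Laff_mem (an n) (bn n) (habn n) s).2 s.2)
  have m2 := hPQ ((Laff_mem a b hab s).2 s.2)
  have h3 := h1 _ m1
  have h4 : dist (Laff (an n) (bn n) s) (Laff a b s) < δ := by
    rw [Real.dist_eq]
    refine lt_of_le_of_lt ?_ h2
    have e : Laff (an n) (bn n) s - Laff a b s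
        = (an n - a) * ((1 - s) / 2) + (bn n - b) * ((1 + s) / 2) := by unfold Laff; ring
    rw [e]
    refine (abs_add_le _ _).trans ?_
    rw [abs_mul, abs_mul]
    have hs := s.2
    have b1 : |(1 - (s : ℝ)) / 2| ≤ 1 := by rw [abs_le]; constructor <;> linarith [hs.1, hs.2]
    have b2 : |(1 + (s : ℝ)) / 2| ≤ 1 := by rw [abs_le]; constructor <;> linarith [hs.1, hs.2]
    have c1 := mul_le_of_le_one_right (abs_nonneg (an n - a)) b1
    have c2 := mul_le_of_le_one_right (abs_nonneg (bn n - b)) b2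
    linarith
  have h5 := hδf _ m1 _ m2 h4
  rw [dist_comm] at h3
  have := dist_triangle (fn n (Laff (an n) (bn n) s)) (f (Laff (an n) (bn n) s)) (f (Laff a b s))
  linarith

theorem GG_unif (v : CI) (a b : ℝ) (hab : a < b) (an bn : ℕ → ℝ) (habn : ∀ n, an n < bn n)
    (ha : Tendsto an atTop (𝓝 a)) (hb : Tendsto bn atTop (𝓝 b)) (ε : ℝ) (hε : 0 < ε) :
    ∀ᶠ n in atTop, ∀ z : ℂ, |GG v (LinvC (an n) (bn n) z) - GG v (LinvC a b z)| ≤ ε := by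
  have hc : Tendsto (fun n => (b - a) / (bn n - an n)) atTop (𝓝 1) := by
    have : Tendsto (fun n => (b - a) / (bn n - an n)) atTop (𝓝 ((b - a) / (b - a))) :=
      tendsto_const_nhds.div (hb.sub ha) (by linarith)
    rwa [div_self (by linarith)] at this
  have he : Tendsto (fun n => ((a + b) - (an n + bn n)) / (bn n - an n)) atTop (𝓝 0) := by
    have : Tendsto (fun n => ((a + b) - (an n + bn n)) / (bn n - an n)) atTop
        (𝓝 (((a + b) - (a + b)) / (b - a))) :=
      (tendsto_const_nhds.sub (ha.add hb)).div (hb.sub ha) (by linarith)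
    simpa using this
  filter_upwards [G_unif (GG v) (GG_cont v) _ (GG_tendsto v) _ _ hc he ε hε] with n hn z
  have := hn (LinvC a b z)
  have e : LinvC (an n) (bn n) z = (((b - a) / (bn n - an n) : ℝ) : ℂ) * LinvC a b z
      + ((((a + b) - (an n + bn n)) / (bn n - an n) : ℝ) : ℂ) := by
    unfold LinvC
    have n1 : ((b : ℂ) - a) ≠ 0 := by
      rw [← Complex.ofReal_sub]; exact Complex.ofReal_ne_zero.2 (by linarith)
    have n2 : ((bn n : ℂ) - an n) ≠ 0 := by
      rw [← Complex.ofReal_sub]; exact Complex.ofReal_ne_zero.2 (by linarith [habn n])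
    push_cast
    field_simp
    ring
  rwa [e]

/-- Lemma 3.10: if `y⃗_n` and `y⃗` are the solutions of
`y⃗_n = ℋ_{Δ⃗_n} y⃗_n + b⃗_n` and `y⃗ = ℋ_{Δ⃗} y⃗ + b⃗` with `b_{n,i} → b_i` uniformly,
then the harmonic extensions `H_{Δ_{n,i}}(y⃗_n)_i` converge to `H_{Δ_i}(y⃗)_i` uniformly
in the extended complex plane. -/
theorem solutions_harmonic_extensions_uniform_convergence
    (d : ℕ) (A B : Fin d → ℝ) (hAB : ∀ i, A i < B i)
    (hdisj : ∀ i j, i ≠ j → Disjoint (Set.Icc (A i) (B i)) (Set.Icc (A j) (B j)))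
    (An Bn : ℕ → Fin d → ℝ)
    (hABn : ∀ n i, An n i < Bn n i)
    (hdisjn : ∀ n, ∀ i j, i ≠ j →
      Disjoint (Set.Icc (An n i) (Bn n i)) (Set.Icc (An n j) (Bn n j)))
    (hconvA : ∀ i, Tendsto (fun n => An n i) atTop (𝓝 (A i)))
    (hconvB : ∀ i, Tendsto (fun n => Bn n i) atTop (𝓝 (B i)))
    -- an interval `[P i, Q i]` containing `⋃_m Δ_{m,i}` and `Δ_i`
    (P Q : Fin d → ℝ)
    (hPQn : ∀ m i, Set.Icc (An m i) (Bn m i) ⊆ Set.Icc (P i) (Q i))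
    (hPQ : ∀ i, Set.Icc (A i) (B i) ⊆ Set.Icc (P i) (Q i))
    -- the data `b_{n,i}` converging uniformly to `b_i`
    (bn : ℕ → Fin d → ℝ → ℝ) (b : Fin d → ℝ → ℝ)
    (hbncont : ∀ n i, ContinuousOn (bn n i) (Set.Icc (P i) (Q i)))
    (hbcont : ∀ i, ContinuousOn (b i) (Set.Icc (P i) (Q i)))
    (hbconv : ∀ i, TendstoUniformlyOn (fun n => bn n i) (b i) atTop (Set.Icc (P i) (Q i)))
    -- the solutions `y⃗_n` and `y⃗`
    (yn : ℕ → Fin d → ℝ → ℝ) (y : Fin d → ℝ → ℝ)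
    (hyncont : ∀ n, memVecC d (An n) (Bn n) (yn n))
    (hycont : memVecC d A B y)
    (hynfix : ∀ n i, ∀ x ∈ Set.Icc (An n i) (Bn n i),
      yn n i x = calH d (An n) (Bn n) (yn n) i x + bn n i x)
    (hyfix : ∀ i, ∀ x ∈ Set.Icc (A i) (B i),
      y i x = calH d A B y i x + b i x) :
    -- conclusion: uniform convergence of the harmonic extensions on the extended plane
    -- (off the two slits, together with convergence of the values at infinity)
    ∀ i, ∀ ε > (0 : ℝ), ∀ᶠ n in atTop,
      (∀ z : ℂ,
        z ∉ Complex.ofReal '' (Set.Icc (A i) (B i) ∪ Set.Icc (An n i) (Bn n i)) →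
        |harmExt (An n i) (Bn n i) (yn n i) z - harmExt (A i) (B i) (y i) z| ≤ ε) ∧
      |(∫ x, yn n i x ∂(arcsineMeasure (An n i) (Bn n i))) -
        ∫ x, y i x ∂(arcsineMeasure (A i) (B i))| ≤ ε := by
  have hbn' : ∀ n i, ContinuousOn (bn n i) (Icc (An n i) (Bn n i)) :=
    fun n i => (hbncont n i).mono (hPQn n i)
  have hb' : ∀ i, ContinuousOn (b i) (Icc (A i) (B i)) := fun i => (hbcont i).mono (hPQ i)
  let vn : ℕ → Fin d → CI := fun n i => pull (An n i) (Bn n i) (hABn n i) (yn n i) (hyncont n i)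
  let v : Fin d → CI := fun i => pull (A i) (B i) (hAB i) (y i) (hycont i)
  have hlim : Tendsto vn atTop (𝓝 v) := by
    refine solve_conv (TT d (par d A B hAB hdisj)) (TT_compact d _) ?_
      (fun n => TT d (par d (An n) (Bn n) (hABn n) (hdisjn n))) ?_
      (fun n i => pull (An n i) (Bn n i) (hABn n i) (bn n i) (hbn' n i))
      (fun i => pull (A i) (B i) (hAB i) (b i) (hb' i)) ?_ vn v
      (fun n => fix_pull d (An n) (Bn n) (hABn n) (hdisjn n) (yn n) (bn n) (hyncont n) (hbn' n)
        (hynfix n))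
      (fix_pull d A B hAB hdisj y b hycont hb' hyfix)
    · intro w hw
      refine uniq d A B hAB hdisj w (fun i s => ?_)
      rw [← TT_par d A B hAB hdisj, hw]
    · apply TT_tendsto
      intro i j hij
      rw [tendsto_subtype_rng]
      exact ((hconvA i).prodMk_nhds (hconvB i)).prodMk_nhds ((hconvA j).prodMk_nhds (hconvB j))
    · rw [tendsto_pi_nhds]
      intro i
      exact pull_tendsto (A i) (B i) (P i) (Q i) (hAB i) (fun n => An n i) (fun n => Bn n i)
        (fun n => hABn n i) (hconvA i) (hconvB i) (hPQ i) (fun n => hPQn n i) (b i)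
        (fun n => bn n i) (hbcont i) (fun n => hbncont n i) (hbconv i)
  intro i ε hε
  have hi : ∀ᶠ n in atTop, ‖vn n i - v i‖ < ε / 2 := by
    have := (Metric.tendsto_nhds.1 ((tendsto_pi_nhds.1 hlim) i)) (ε / 2) (by linarith)
    simpa only [dist_eq_norm] using this
  filter_upwards [hi, GG_unif (v i) (A i) (B i) (hAB i) (fun n => An n i) (fun n => Bn n i)
    (fun n => hABn n i) (hconvA i) (hconvB i) (ε / 2) (by linarith)] with n h1 h2
  constructor
  · intro z hz
    rw [image_union, mem_union, not_or] at hz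
    rw [harm_pull _ _ (hABn n i) _ (hyncont n i) z hz.2, harm_pull _ _ (hAB i) _ (hycont i) z hz.1]
    have h3 := GG_lip (vn n i) (v i) (LinvC (An n i) (Bn n i) z)
    have h4 := abs_sub_le (GG (vn n i) (LinvC (An n i) (Bn n i) z))
      (GG (v i) (LinvC (An n i) (Bn n i) z)) (GG (v i) (LinvC (A i) (B i) z))
    have h5 := h2 z
    exact h4.trans (by linarith)
  · rw [int_pull _ _ (hABn n i) _ (hyncont n i), int_pull _ _ (hAB i) _ (hycont i)]
    have h3 := ell_abs (vn n i - v i)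
    have h4 : ∫ x, ex (vn n i - v i) x ∂om = (∫ x, ex (vn n i) x ∂om) - ∫ x, ex (v i) x ∂om :=
      map_sub ell (vn n i) (v i)
    rw [h4] at h3
    exact h3.trans (by linarith)

end
end

section
/- In the setting where Δ⃗_{n⃗} ⊆ Δ⃗ are vectors of pairwise disjoint closed intervals and ℋ_{n⃗} := ℋ_{Δ⃗_{n⃗},Δ⃗}, define for u⃗ ∈ C(Δ⃗) the vector of constants u⃗_{n⃗,∞} := ( (H_{Δ_{n⃗,1}} u_1)(∞), …, (H_{Δ_{n⃗,d}} u_d)(∞) ) and the rank-≤d operator 𝒦_{n⃗} u⃗ := (I − (I − ℋ_{n⃗})^{−1}) u⃗_{n⃗,∞}. Then, with 𝔅 either C(Δ⃗) or C¹(Δ⃗): I − 𝒦_{n⃗} is an invertible linear operator of 𝔅 onto itself, with (I − 𝒦_{n⃗})^{−1} u⃗ = u⃗ − ℋ_{n⃗} u⃗_{n⃗,∞}, and there is a constant C independent of n⃗ such that ‖(I − 𝒦_{n⃗})^{−1}‖_𝔅 ≤ C. -/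
open MeasureTheory Set Filter Topology Polynomial

noncomputable section

/-- The vector of constants `u⃗_{n⃗,∞}`, viewed as a vector of constant functions:
`(u⃗_{n⃗,∞})_i = (H_{Δ_{n⃗,i}} u_i)(∞) = ∫ u_i dω_{Δ_{n⃗,i}}`. -/
def avgVec (d : ℕ) (An Bn : Fin d → ℝ) (u : Fin d → ℝ → ℝ) : Fin d → ℝ → ℝ :=
  fun i _ => ∫ t, u i t ∂(arcsineMeasure (An i) (Bn i))

lemma arcsine_ae {a b : ℝ} : ∀ᵐ t ∂(arcsineMeasure a b), t ∈ Set.Icc a b := by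
  have h : arcsineMeasure a b ≪ volume.restrict (Set.Icc a b) :=
    withDensity_absolutelyContinuous _ _
  exact h.ae_le (ae_restrict_mem measurableSet_Icc)

lemma arcsine_integral {a b : ℝ} (hab : a < b) (f : ℝ → ℝ) :
    ∫ t, f t ∂(arcsineMeasure a b) =
      ∫ t in a..b, (1 / (Real.pi * Real.sqrt ((t - a) * (b - t)))) * f t := by
  unfold arcsineMeasure
  rw [integral_withDensity_eq_integral_toReal_smul₀]
  · rw [intervalIntegral.integral_of_le hab.le, ← integral_Icc_eq_integral_Ioc]
    refine integral_congr_ae (Eventually.of_forall fun t => ?_)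
    have : 0 ≤ 1 / (Real.pi * Real.sqrt ((t - a) * (b - t))) := by positivity
    simp only [smul_eq_mul]
    rw [ENNReal.toReal_ofReal this]
  · fun_prop
  · exact Eventually.of_forall fun t => ENNReal.ofReal_lt_top

lemma arcsin_ftc {a b : ℝ} (hab : a < b) (φ φ' g' : ℝ → ℝ)
    (hc : ContinuousOn φ (Set.Icc a b))
    (hd : ∀ t ∈ Set.Ioo a b, HasDerivAt φ (φ' t) t)
    (hlt : ∀ t ∈ Set.Ioo a b, 0 < 1 - φ t ^ 2)
    (hg : ∀ t ∈ Set.Ioo a b, 1 / Real.pi * (1 / Real.sqrt (1 - φ t ^ 2) * φ' t) = g' t)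
    (hpos : ∀ t ∈ Set.Ioo a b, 0 ≤ g' t) (ha : φ a = -1) (hb : φ b = 1) :
    IntervalIntegrable g' volume a b ∧ ∫ t in a..b, g' t = 1 := by
  have hcont : ContinuousOn (fun t => 1 / Real.pi * Real.arcsin (φ t)) (Set.Icc a b) :=
    continuousOn_const.mul (Real.continuous_arcsin.comp_continuousOn hc)
  have hder : ∀ t ∈ Set.Ioo a b,
      HasDerivAt (fun t => 1 / Real.pi * Real.arcsin (φ t)) (g' t) t := by
    intro t ht
    rw [← hg t ht]
    have h1 : φ t ≠ -1 := by
      intro h; have := hlt t ht; rw [h] at this; norm_num at this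
    have h2 : φ t ≠ 1 := by
      intro h; have := hlt t ht; rw [h] at this; norm_num at this
    exact ((Real.hasDerivAt_arcsin h1 h2).comp t (hd t ht)).const_mul _
  have hint : IntervalIntegrable g' volume a b := by
    apply intervalIntegral.intervalIntegrable_deriv_of_nonneg
      (g := fun t => 1 / Real.pi * Real.arcsin (φ t))
    · rwa [Set.uIcc_of_le hab.le]
    · rwa [min_eq_left hab.le, max_eq_right hab.le]
    · rwa [min_eq_left hab.le, max_eq_right hab.le]
  refine ⟨hint, ?_⟩
  rw [intervalIntegral.integral_eq_sub_of_hasDerivAt_of_le hab.le hcont hder hint]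
  simp only [ha, hb, Real.arcsin_neg, Real.arcsin_one]
  field_simp
  ring

lemma arcsine_density {a b : ℝ} (hab : a < b) :
    IntervalIntegrable (fun t => 1 / (Real.pi * Real.sqrt ((t - a) * (b - t)))) volume a b ∧
    ∫ t in a..b, 1 / (Real.pi * Real.sqrt ((t - a) * (b - t))) = 1 := by
  have hba : 0 < b - a := sub_pos.2 hab
  have key : ∀ t, 1 - ((2 * t - a - b) / (b - a)) ^ 2
      = (2 / (b - a)) ^ 2 * ((t - a) * (b - t)) := by
    intro t; field_simp; ring
  apply arcsin_ftc hab (fun t => (2 * t - a - b) / (b - a)) (fun _ => 2 / (b - a))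
  · fun_prop
  · intro t _
    have := ((((hasDerivAt_id t).const_mul 2).sub_const a).sub_const b).div_const (b - a)
    simpa using this
  · intro t ht
    simp only [key]
    have h1 := sub_pos.2 ht.1
    have h2 := sub_pos.2 ht.2
    positivity
  · intro t ht
    simp only [key]
    have h1 := sub_pos.2 ht.1
    have h2 := sub_pos.2 ht.2
    rw [Real.sqrt_mul (by positivity), Real.sqrt_sq (by positivity)]
    have : 0 < Real.sqrt ((t - a) * (b - t)) := by positivity
    field_simp
  · intro t _; positivity
  · field_simp; ring
  · field_simp; ring

lemma arcsine_cauchy {a b x : ℝ} (hab : a < b) (hx : x < a ∨ b < x) :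
    ∫ t in a..b, Real.sqrt ((x - a) * (x - b)) *
      (1 / (Real.pi * Real.sqrt ((t - a) * (b - t))) / |x - t|) = 1 := by
  have hba : 0 < b - a := sub_pos.2 hab
  have hD : 0 < (x - a) * (x - b) := by
    rcases hx with h | h
    · exact mul_pos_of_neg_of_neg (by linarith) (by linarith)
    · exact mul_pos (by linarith) (by linarith)
  have hxt : ∀ t ∈ Set.Icc a b, x - t ≠ 0 := by
    intro t ht h
    rcases hx with h' | h'
    · linarith [ht.1]
    · linarith [ht.2]
  have key : ∀ t ∈ Set.Icc a b,
      1 - (((2 * x - a - b) * (2 * t - a - b) - (b - a) ^ 2) / (2 * (b - a) * (x - t))) ^ 2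
      = (2 / ((b - a) * |x - t|)) ^ 2 * ((x - a) * (x - b) * ((t - a) * (b - t))) := by
    intro t ht
    have := hxt t ht
    rw [div_pow 2, mul_pow (b - a), sq_abs]
    field_simp; ring
  refine (arcsin_ftc hab
    (fun t => ((2 * x - a - b) * (2 * t - a - b) - (b - a) ^ 2) / (2 * (b - a) * (x - t)))
    (fun t => 2 * ((x - a) * (x - b)) / ((b - a) * (x - t) ^ 2)) _ ?_ ?_ ?_ ?_ ?_ ?_ ?_).2
  · apply ContinuousOn.div (by fun_prop) (by fun_prop)
    intro t ht
    have := hxt t ht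
    positivity
  · intro t ht
    have h0 := hxt t (Set.Ioo_subset_Icc_self ht)
    have h1 : HasDerivAt (fun t => (2 * x - a - b) * (2 * t - a - b) - (b - a) ^ 2)
        ((2 * x - a - b) * 2) t := by
      have := (((((hasDerivAt_id t).const_mul 2).sub_const a).sub_const b).const_mul
        (2 * x - a - b)).sub_const ((b - a) ^ 2)
      simpa using this
    have h2 : HasDerivAt (fun t => 2 * (b - a) * (x - t)) (2 * (b - a) * (-1)) t := by
      have := ((hasDerivAt_id t).const_sub x).const_mul (2 * (b - a))
      simpa using this
    have h3 := h1.div h2 (by positivity)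
    refine h3.congr_deriv ?_
    field_simp
    ring
  · intro t ht
    have h0 := hxt t (Set.Ioo_subset_Icc_self ht)
    simp only [key t (Set.Ioo_subset_Icc_self ht)]
    have h1 := sub_pos.2 ht.1
    have h2 := sub_pos.2 ht.2
    positivity
  · intro t ht
    have h0 := hxt t (Set.Ioo_subset_Icc_self ht)
    have h1 := sub_pos.2 ht.1
    have h2 := sub_pos.2 ht.2
    have h3 : 0 < |x - t| := abs_pos.2 h0
    simp only [key t (Set.Ioo_subset_Icc_self ht)]
    rw [Real.sqrt_mul (by positivity), Real.sqrt_sq (by positivity), Real.sqrt_mul hD.le,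
      ← sq_abs (x - t)]
    have h4 : 0 < Real.sqrt ((t - a) * (b - t)) := by positivity
    have h5 : 0 < Real.sqrt ((x - a) * (x - b)) := by positivity
    have h6 : (x - a) * (x - b) = Real.sqrt ((x - a) * (x - b)) ^ 2 := (Real.sq_sqrt hD.le).symm
    generalize Real.sqrt ((x - a) * (x - b)) = s at *
    rw [h6]
    field_simp
  · intro t _; positivity
  · have := hxt a (Set.left_mem_Icc.2 hab.le)
    field_simp; ring
  · have := hxt b (Set.right_mem_Icc.2 hab.le)
    field_simp; ring

lemma arcsine_prob {a b : ℝ} (hab : a < b) : IsProbabilityMeasure (arcsineMeasure a b) := by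
  obtain ⟨h1, h2⟩ := arcsine_density hab
  constructor
  unfold arcsineMeasure
  rw [withDensity_apply _ MeasurableSet.univ, Measure.restrict_univ,
    ← ofReal_integral_eq_lintegral_ofReal]
  · rw [integral_Icc_eq_integral_Ioc, ← intervalIntegral.integral_of_le hab.le, h2]
    simp
  · have := (intervalIntegrable_iff_integrableOn_Icc_of_le hab.le).1 h1
    exact this
  · exact Eventually.of_forall fun t => by positivity

lemma arcsine_const {a b : ℝ} (hab : a < b) (c : ℝ) : ∫ _, c ∂(arcsineMeasure a b) = c := by
  have := arcsine_prob hab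
  simp

lemma harmExt_congr_s11 {a b : ℝ} {u v : ℝ → ℝ} (h : ∀ t ∈ Set.Icc a b, u t = v t) (z : ℂ) :
    harmExt a b u z = harmExt a b v z := by
  unfold harmExt cauchyT
  congr 2
  refine integral_congr_ae ?_
  filter_upwards [arcsine_ae] with t ht
  rw [h t ht]

lemma harmExt_const {a b x : ℝ} (hab : a < b) (hx : x < a ∨ b < x) (c : ℝ) :
    harmExt a b (fun _ => c) (x : ℂ) = c := by
  have hD : 0 < (x - a) * (x - b) := by
    rcases hx with h | h
    · exact mul_pos_of_neg_of_neg (by linarith) (by linarith)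
    · exact mul_pos (by linarith) (by linarith)
  have hxa : x - a ≠ 0 := fun h => by simp [h] at hD
  have hr : 0 < (x - b) / (x - a) := by
    have : (x - b) / (x - a) = ((x - a) * (x - b)) / (x - a) ^ 2 := by field_simp
    rw [this]; positivity
  have hw : wBranch a b (x : ℂ) = (((x - a) * Real.sqrt ((x - b) / (x - a)) : ℝ) : ℂ) := by
    unfold wBranch
    have e1 : ((x : ℂ) - b) / (x - a) = (((x - b) / (x - a) : ℝ) : ℂ) := by push_cast; rfl
    rw [e1, ← Complex.ofReal_log hr.le]
    have e2 : (1 / 2 : ℂ) * ((Real.log ((x - b) / (x - a)) : ℝ) : ℂ)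
        = ((1 / 2 * Real.log ((x - b) / (x - a)) : ℝ) : ℂ) := by push_cast; rfl
    rw [e2, ← Complex.ofReal_exp]
    have e3 : Real.exp (1 / 2 * Real.log ((x - b) / (x - a))) = Real.sqrt ((x - b) / (x - a)) := by
      rw [Real.sqrt_eq_rpow, Real.rpow_def_of_pos hr, mul_comm]
    rw [e3]; push_cast; rfl
  have hc : cauchyT a b (fun _ => c) (x : ℂ)
      = ((∫ t, c / (x - t) ∂(arcsineMeasure a b) : ℝ) : ℂ) := by
    unfold cauchyT
    rw [← integral_complex_ofReal]
    congr 1; ext t; push_cast; rfl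
  unfold harmExt
  rw [hw, hc, ← Complex.ofReal_mul, Complex.ofReal_re, arcsine_integral hab]
  have hJ := arcsine_cauchy hab hx
  rw [← intervalIntegral.integral_const_mul]
  suffices h : ∫ t in a..b, (x - a) * Real.sqrt ((x - b) / (x - a)) *
      (1 / (Real.pi * Real.sqrt ((t - a) * (b - t))) * (c / (x - t)))
      = ∫ t in a..b, c * (Real.sqrt ((x - a) * (x - b)) *
      (1 / (Real.pi * Real.sqrt ((t - a) * (b - t))) / |x - t|)) by
    rw [h, intervalIntegral.integral_const_mul, hJ, mul_one]
  apply intervalIntegral.integral_congr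
  intro t ht
  rw [Set.uIcc_of_le hab.le] at ht
  have hs : Real.sqrt ((x - a) * (x - b)) = |x - a| * Real.sqrt ((x - b) / (x - a)) := by
    rw [← Real.sqrt_sq_eq_abs, ← Real.sqrt_mul (sq_nonneg _)]
    congr 1; field_simp
  simp only [hs]
  rcases hx with h | h
  · have h1 : x - t < 0 := by linarith [ht.1]
    have h2 : x - a < 0 := by linarith
    rw [abs_of_neg h1, abs_of_neg h2, div_neg]; ring
  · have h1 : 0 < x - t := by linarith [ht.2]
    have h2 : 0 < x - a := by linarith
    rw [abs_of_pos h1, abs_of_pos h2]; ring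

/-- The value of `calH` on constants. -/
def constH (d : ℕ) (c : Fin d → ℝ) (i : Fin d) : ℝ :=
  -(1 / 2) * ∑ j ∈ Finset.univ.erase i, c j

lemma calH_congr {d : ℕ} {An Bn : Fin d → ℝ} {u v : Fin d → ℝ → ℝ}
    (h : ∀ i, ∀ t ∈ Set.Icc (An i) (Bn i), u i t = v i t) (i : Fin d) (x : ℝ) :
    calH d An Bn u i x = calH d An Bn v i x := by
  unfold calH
  congr 1
  exact Finset.sum_congr rfl fun j _ => harmExt_congr_s11 (h j) _

lemma calH_const {d : ℕ} {A B An Bn : Fin d → ℝ}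
    (hdisj : ∀ i j, i ≠ j → Disjoint (Set.Icc (A i) (B i)) (Set.Icc (A j) (B j)))
    (hABn : ∀ i, An i < Bn i)
    (hsubn : ∀ i, Set.Icc (An i) (Bn i) ⊆ Set.Icc (A i) (B i))
    (c : Fin d → ℝ) (i : Fin d) (x : ℝ) (hx : x ∈ Set.Icc (A i) (B i)) :
    calH d An Bn (fun j _ => c j) i x = constH d c i := by
  unfold calH constH
  congr 1
  refine Finset.sum_congr rfl fun j hj => harmExt_const (hABn j) ?_ _
  have hij : i ≠ j := (Finset.ne_of_mem_erase hj).symm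
  by_contra! hcon
  exact Set.disjoint_left.1 (hdisj i j hij) hx (hsubn j ⟨hcon.1, hcon.2⟩)

lemma constH_eq {d : ℕ} (c : Fin d → ℝ) (i : Fin d) :
    constH d c i = -(1 / 2) * (∑ j, c j - c i) := by
  unfold constH
  rw [← Finset.add_sum_erase _ c (Finset.mem_univ i)]; ring

lemma constH_inv {d : ℕ} (c : Fin d → ℝ) : ∃ e : Fin d → ℝ, ∀ i, e i - constH d e i = c i := by
  refine ⟨fun i => 2 * c i - 2 * (∑ j, c j) / (d + 1), fun i => ?_⟩
  rw [constH_eq, Finset.sum_sub_distrib, ← Finset.mul_sum]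
  simp only [Finset.sum_const, Finset.card_univ, Fintype.card_fin, nsmul_eq_mul]
  have : (d : ℝ) + 1 ≠ 0 := by positivity
  field_simp
  ring

lemma avg_eq {a b : ℝ} (hab : a < b) {u v : ℝ → ℝ} (k : ℝ)
    (hu : ContinuousOn u (Set.Icc a b)) (h : ∀ t ∈ Set.Icc a b, v t = u t + k) :
    ∫ t, v t ∂(arcsineMeasure a b) = ∫ t, u t ∂(arcsineMeasure a b) + k := by
  have hp := arcsine_prob hab
  have hint : Integrable u (arcsineMeasure a b) := by
    obtain ⟨C, hC⟩ := isCompact_Icc.exists_bound_of_continuousOn hu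
    refine Integrable.of_bound (C := C) ?_ ?_
    · have h : arcsineMeasure a b ≪ volume.restrict (Set.Icc a b) :=
        withDensity_absolutelyContinuous _ _
      exact (hu.aestronglyMeasurable measurableSet_Icc).mono_ac h
    · filter_upwards [arcsine_ae] with t ht using hC t ht
  have : ∫ t, v t ∂(arcsineMeasure a b) = ∫ t, (u t + k) ∂(arcsineMeasure a b) := by
    refine integral_congr_ae ?_
    filter_upwards [arcsine_ae] with t ht using h t ht
  rw [this, integral_add hint (integrable_const k), arcsine_const hab]

lemma abs_le_supIcc {a b : ℝ} {u : ℝ → ℝ} (hu : ContinuousOn u (Set.Icc a b)) {x : ℝ}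
    (hx : x ∈ Set.Icc a b) : |u x| ≤ supIcc a b u :=
  le_csSup (isCompact_Icc.image_of_continuousOn hu.abs).bddAbove ⟨x, hx, rfl⟩

lemma supIcc_sub_le {a b : ℝ} (hab : a < b) {u v : ℝ → ℝ} (hu : ContinuousOn u (Set.Icc a b))
    (k : ℝ) (h : ∀ t ∈ Set.Icc a b, v t = u t - k) :
    supIcc a b v ≤ supIcc a b u + |k| := by
  apply csSup_le ((Set.nonempty_Icc.2 hab.le).image _)
  rintro _ ⟨x, hx, rfl⟩
  simp only [h x hx]
  exact (abs_sub _ _).trans (by gcongr; exact abs_le_supIcc hu hx)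

lemma supIcc_congr {a b : ℝ} {u v : ℝ → ℝ} (h : ∀ t ∈ Set.Icc a b, v t = u t) :
    supIcc a b v = supIcc a b u := by
  unfold supIcc
  congr 1
  exact Set.image_congr fun t ht => by rw [h t ht]

lemma supIcc_nonneg (a b : ℝ) (u : ℝ → ℝ) : 0 ≤ supIcc a b u := by
  apply Real.sSup_nonneg
  rintro _ ⟨x, _, rfl⟩
  exact abs_nonneg _

lemma abs_avg_le {a b p q : ℝ} (hpq : p < q) (hsub : Set.Icc p q ⊆ Set.Icc a b) {u : ℝ → ℝ}
    (hu : ContinuousOn u (Set.Icc a b)) :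
    |∫ t, u t ∂(arcsineMeasure p q)| ≤ supIcc a b u := by
  have hp := arcsine_prob hpq
  have := norm_integral_le_of_norm_le_const (μ := arcsineMeasure p q) (f := u)
    (C := supIcc a b u) (by
      filter_upwards [arcsine_ae] with t ht using abs_le_supIcc hu (hsub ht))
  simpa using this

lemma abs_constH_le {d : ℕ} (c s : Fin d → ℝ) (h : ∀ i, |c i| ≤ s i) (i : Fin d) :
    |constH d c i| ≤ ∑ j, s j := by
  unfold constH
  have h0 : ∀ j, 0 ≤ s j := fun j => (abs_nonneg _).trans (h j)
  have h1 : |∑ j ∈ Finset.univ.erase i, c j| ≤ ∑ j, s j :=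
    (Finset.abs_sum_le_sum_abs _ _).trans ((Finset.sum_le_sum fun j _ => h j).trans
      (Finset.sum_le_sum_of_subset_of_nonneg (Finset.erase_subset _ _) fun j _ _ => h0 j))
  rw [abs_mul]
  have : |(-(1 / 2) : ℝ)| = 1 / 2 := by norm_num
  rw [this]
  linarith [abs_nonneg (∑ j ∈ Finset.univ.erase i, c j)]

/-- Lemma 3.20: with `𝒦_{n⃗} u⃗ = (I − (I−ℋ_{n⃗})⁻¹) u⃗_{n⃗,∞}`, the operator
`I − 𝒦_{n⃗}` is invertible with explicit inverse `(I − 𝒦_{n⃗})⁻¹ u⃗ = u⃗ − ℋ_{n⃗} u⃗_{n⃗,∞}`,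
uniformly bounded in `n⃗` on `C(Δ⃗)` and `C¹(Δ⃗)`. -/
theorem K_operator_invertible_uniformly_bounded
    (d : ℕ) (A B : Fin d → ℝ) (hAB : ∀ i, A i < B i)
    (hdisj : ∀ i j, i ≠ j → Disjoint (Set.Icc (A i) (B i)) (Set.Icc (A j) (B j)))
    -- subintervals `Δ_{n⃗,i} ⊆ Δ_i`
    (An Bn : ℕ → Fin d → ℝ)
    (hABn : ∀ n i, An n i < Bn n i)
    (hsubn : ∀ n i, Set.Icc (An n i) (Bn n i) ⊆ Set.Icc (A i) (B i))
    -- `R n = (I − ℋ_{n⃗})⁻¹`, the (two-sided) inverse of `I − ℋ_{Δ⃗_{n⃗},Δ⃗}` on `C(Δ⃗)`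
    (R : ℕ → (Fin d → ℝ → ℝ) → (Fin d → ℝ → ℝ))
    (hRmem : ∀ n w, memVecC d A B w → memVecC d A B (R n w))
    (hRright : ∀ n w, memVecC d A B w → ∀ i, ∀ x ∈ Set.Icc (A i) (B i),
      R n w i x - calH d (An n) (Bn n) (R n w) i x = w i x)
    (hRleft : ∀ n w, memVecC d A B w → ∀ i, ∀ x ∈ Set.Icc (A i) (B i),
      R n (fun j y => w j y - calH d (An n) (Bn n) w j y) i x = w i x) :
    -- `(I − 𝒦_{n⃗})` maps `u⃗ − ℋ_{n⃗} u⃗_{n⃗,∞}` back to `u⃗` (surjectivity with explicit inverse)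
    (∀ n u, memVecC d A B u →
      ∀ i, ∀ x ∈ Set.Icc (A i) (B i),
        (fun j y => u j y - calH d (An n) (Bn n) (avgVec d (An n) (Bn n) u) j y) i x -
          (avgVec d (An n) (Bn n)
              (fun j y => u j y - calH d (An n) (Bn n) (avgVec d (An n) (Bn n) u) j y) i x -
            R n (avgVec d (An n) (Bn n)
              (fun j y => u j y - calH d (An n) (Bn n) (avgVec d (An n) (Bn n) u) j y)) i x) =
          u i x) ∧
    -- injectivity of `I − 𝒦_{n⃗}` on `C(Δ⃗)`
    (∀ n u u', memVecC d A B u → memVecC d A B u' →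
      (∀ i, ∀ x ∈ Set.Icc (A i) (B i),
        u i x - (avgVec d (An n) (Bn n) u i x - R n (avgVec d (An n) (Bn n) u) i x) =
          u' i x - (avgVec d (An n) (Bn n) u' i x - R n (avgVec d (An n) (Bn n) u') i x)) →
      ∀ i, ∀ x ∈ Set.Icc (A i) (B i), u i x = u' i x) ∧
    -- uniform bound `‖(I − 𝒦_{n⃗})⁻¹‖ ≤ C` on `C(Δ⃗)` and on `C¹(Δ⃗)`
    (∃ C : ℝ, ∀ n u,
      (memVecC d A B u →
        vecCNorm d A B
          (fun i x => u i x - calH d (An n) (Bn n) (avgVec d (An n) (Bn n) u) i x) ≤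
          C * vecCNorm d A B u) ∧
      (memVecC1 d A B u →
        vecC1Norm d A B
          (fun i x => u i x - calH d (An n) (Bn n) (avgVec d (An n) (Bn n) u) i x) ≤
          C * vecC1Norm d A B u)) := by
  have hcH := fun n => calH_const hdisj (hABn n) (hsubn n)
  -- `R n` on constants
  have hR : ∀ n (e : Fin d → ℝ), ∀ i, ∀ x ∈ Set.Icc (A i) (B i),
      R n (fun j _ => e j - constH d e j) i x = e i := by
    intro n e i x hx
    classical
    let w : Fin d → ℝ → ℝ := fun j y => if y ∈ Set.Icc (A j) (B j) then e j else
      (e j - constH d e j) + calH d (An n) (Bn n) (fun j _ => e j) j y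
    have hw : ∀ j, ∀ y ∈ Set.Icc (A j) (B j), w j y = e j := fun j y hy => if_pos hy
    have hwc : memVecC d A B w := fun j => continuousOn_const.congr (hw j)
    have hH : ∀ j y, calH d (An n) (Bn n) w j y
        = calH d (An n) (Bn n) (fun j _ => e j) j y :=
      calH_congr fun j y hy => hw j y (hsubn n j hy)
    have hfun : (fun j y => w j y - calH d (An n) (Bn n) w j y)
        = fun j _ => e j - constH d e j := by
      funext j y
      rw [hH]
      by_cases hy : y ∈ Set.Icc (A j) (B j)
      · rw [hw j y hy, hcH n e j y hy]
      · have : w j y = (e j - constH d e j) + calH d (An n) (Bn n) (fun j _ => e j) j y :=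
          if_neg hy
        rw [this]; ring
    have := hRleft n w hwc i x hx
    rw [hfun, hw i x hx] at this
    exact this
  refine ⟨?_, ?_, ?_⟩
  · intro n u hu i x hx
    set c : Fin d → ℝ := fun j => ∫ t, u j t ∂(arcsineMeasure (An n j) (Bn n j)) with hc
    have hav : avgVec d (An n) (Bn n) u = fun j _ => c j := rfl
    rw [hav]
    have hav2 : avgVec d (An n) (Bn n)
        (fun j y => u j y - calH d (An n) (Bn n) (fun j _ => c j) j y)
        = fun j _ => c j - constH d c j := by
      funext j _
      unfold avgVec
      rw [sub_eq_add_neg]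
      refine avg_eq (hABn n j) _ ((hu j).mono (hsubn n j)) fun t ht => ?_
      simp only [hcH n c j t (hsubn n j ht)]; ring
    rw [hav2, hR n c i x hx]
    simp only [hcH n c i x hx]
    ring
  · intro n u u' hu hu' h
    set c : Fin d → ℝ := fun j => ∫ t, u j t ∂(arcsineMeasure (An n j) (Bn n j)) with hc
    set c' : Fin d → ℝ := fun j => ∫ t, u' j t ∂(arcsineMeasure (An n j) (Bn n j)) with hc'
    have hav : avgVec d (An n) (Bn n) u = fun j _ => c j := rfl
    have hav' : avgVec d (An n) (Bn n) u' = fun j _ => c' j := rfl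
    obtain ⟨e, he⟩ := constH_inv c
    obtain ⟨e', he'⟩ := constH_inv c'
    have hfe : (fun j (_ : ℝ) => c j) = fun j _ => e j - constH d e j := by
      funext j _; rw [he]
    have hfe' : (fun j (_ : ℝ) => c' j) = fun j _ => e' j - constH d e' j := by
      funext j _; rw [he']
    have hRc : ∀ i, ∀ x ∈ Set.Icc (A i) (B i), R n (fun j _ => c j) i x = e i := by
      rw [hfe]; exact hR n e
    have hRc' : ∀ i, ∀ x ∈ Set.Icc (A i) (B i), R n (fun j _ => c' j) i x = e' i := by
      rw [hfe']; exact hR n e'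
    rw [hav, hav'] at h
    have h2 : ∀ i, ∀ x ∈ Set.Icc (A i) (B i),
        u' i x = u i x + (-(c i - e i) + (c' i - e' i)) := by
      intro i x hx
      have := h i x hx
      rw [hRc i x hx, hRc' i x hx] at this
      linarith
    have hee : e = e' := by
      funext i
      have := avg_eq (hABn n i) _ ((hu i).mono (hsubn n i))
        fun t ht => h2 i t (hsubn n i ht)
      have h3 : c' i = c i + (-(c i - e i) + (c' i - e' i)) := this
      linarith
    intro i x hx
    have h3 := h2 i x hx
    have h4 := he i
    have h5 := he' i
    rw [hee] at h4 h3
    linarith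
  · refine ⟨1 + d, fun n u => ?_⟩
    set c : Fin d → ℝ := fun j => ∫ t, u j t ∂(arcsineMeasure (An n j) (Bn n j)) with hc
    have hav : avgVec d (An n) (Bn n) u = fun j _ => c j := rfl
    rw [hav]
    have hk : memVecC d A B u → ∀ i, |constH d c i| ≤ vecCNorm d A B u := fun hu i =>
      abs_constH_le c _ (fun j => abs_avg_le (hABn n j) (hsubn n j) (hu j)) i
    have hs : memVecC d A B u → ∀ i, supIcc (A i) (B i)
        (fun x => u i x - calH d (An n) (Bn n) (fun j _ => c j) i x)
        ≤ supIcc (A i) (B i) (u i) + vecCNorm d A B u := fun hu i =>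
      (supIcc_sub_le (hAB i) (hu i) (constH d c i) fun t ht => by
        rw [hcH n c i t ht]).trans (by gcongr; exact hk hu i)
    constructor
    · intro hu
      calc _ ≤ ∑ i, (supIcc (A i) (B i) (u i) + vecCNorm d A B u) :=
            Finset.sum_le_sum fun i _ => hs hu i
        _ = _ := by
          rw [Finset.sum_add_distrib]
          simp only [Finset.sum_const, Finset.card_univ, Fintype.card_fin, nsmul_eq_mul]
          change vecCNorm d A B u + _ = _
          ring
    · intro hu1
      have hu : memVecC d A B u := fun i => (hu1 i).continuousOn
      have hder : ∀ i, supIcc (A i) (B i) (derivWithin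
          (fun x => u i x - calH d (An n) (Bn n) (fun j _ => c j) i x) (Set.Icc (A i) (B i)))
          = supIcc (A i) (B i) (derivWithin (u i) (Set.Icc (A i) (B i))) := by
        intro i
        refine supIcc_congr fun t ht => ?_
        have : derivWithin (fun x => u i x - calH d (An n) (Bn n) (fun j _ => c j) i x)
            (Set.Icc (A i) (B i)) t
            = derivWithin (fun x => u i x - constH d c i) (Set.Icc (A i) (B i)) t :=
          derivWithin_congr (fun y hy => by rw [hcH n c i y hy]) (by rw [hcH n c i t ht])
        rw [this, derivWithin_sub_const]
      have hle : vecCNorm d A B u ≤ vecC1Norm d A B u :=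
        Finset.sum_le_sum fun i _ => le_add_of_nonneg_right (supIcc_nonneg _ _ _)
      calc _ ≤ ∑ i, ((supIcc (A i) (B i) (u i)
              + supIcc (A i) (B i) (derivWithin (u i) (Set.Icc (A i) (B i))))
              + vecC1Norm d A B u) := by
            refine Finset.sum_le_sum fun i _ => ?_
            rw [hder i]
            linarith [hs hu i]
        _ = _ := by
          rw [Finset.sum_add_distrib]
          simp only [Finset.sum_const, Finset.card_univ, Fintype.card_fin, nsmul_eq_mul]
          change vecC1Norm d A B u + _ = _
          ring

end
end
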